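/- arXiv:2303.05055 — 2 statements merged into one kernel-verified Lean document; each statement's English description precedes it below -/
import Mathlib

section
/- Let U ⊂ ℝ^n be a connected open set and let T(U) = {z ∈ ℂ^n : Re(z) ∈ U} be the associated tube domain. If f : T(U) → ℂ is holomorphic, then f has a holomorphic continuation to T(conv(U)), the tube over the convex hull of U. -/
/-!
The proof approximates `f` by entire functions and shows that convergence of entire functions over
`U` spreads to the convex hull of `U`.

*Approximation.* For `b ∈ U` the normalised integral of `f(w) exp (m² ∑ (zᵢ - wᵢ)²)` over the slice
`w ∈ b + i [-k, k]ⁿ` is an entire function of `z`. For `z` on the slice it tends to `f z` as `m → ∞`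
(`approx_tendsto`). Over a bounded base and with `k` large compared with `|Im z|`, moving the slice
changes it by exponentially small terms only, by the divergence theorem and holomorphy of the
integrand (`slice_sub_slice`, `approx_shift`). Hence a single `b` serves all `z`, and `f` is a locally
uniform limit of entire functions (`exists_entire_seq`). Exhausting the tube by compact sets yields
one sequence of entire functions `F k` converging to `f` uniformly on compact sets
(`exists_entire_seq_compact`).

*Propagation.* Let `W` be the set of base points near which `F k` is uniformly Cauchy on every
truncated tube. It is open and contains `U`. If `W` contains two sides of a triangle, it contains the
third: the maximum principle on quadratic analytic discs with boundary over the two sides bounds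
`F k - F l` over the triangle (`disc`, `goodSet_triangle`). An open set with this property contains
the convex hull of its connected subsets (`convexHull_subset_of_triangle`), so the `F k` converge over
`conv U`, and the limit is holomorphic (`exists_limit_on_hull`) and equals `f` over `U`.
-/

namespace Tube

open Filter Topology Metric Set MeasureTheory

/-! ### The quadratic disc and limits of entire functions -/

/-- Propagation from two edges to the triangle in `ℂ²`: an entire `H` bounded by `C` over the truncated
tube above the (slightly prolonged) edges `{0} × [0, 1 + δ]` and `[0, 1 + δ] × {0}` is bounded by `C`
at every real point `(s₀, t₀)` of the triangle `s, t ≥ 0`, `s + t ≤ 1`. The truncation height `R₁`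
depends on `δ` only.

The point lies on the quadratic curve `S - T = ζ`, `S + T = c + ε ζ²`. Where `Re S, Re T > 0` and
`|Re ζ| < 1 + δ`, the term `-ε (Im ζ)²` in `Re (S + T)` keeps `Im ζ` bounded, and on the boundary of
this region `Re S` or `Re T` vanishes; the maximum principle does the rest. -/
lemma disc {δ : ℝ} (hδ : 0 < δ) (hδ1 : δ ≤ 1) :
    ∃ R₁ : ℝ, 0 ≤ R₁ ∧ ∀ H : ℂ × ℂ → ℂ, Differentiable ℂ H → ∀ C s₀ t₀ : ℝ,
      0 ≤ s₀ → 0 ≤ t₀ → s₀ + t₀ ≤ 1 →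
      (∀ s t : ℂ, |s.im| ≤ R₁ → |t.im| ≤ R₁ →
        ((s.re = 0 ∧ t.re ∈ Icc 0 (1 + δ)) ∨ (t.re = 0 ∧ s.re ∈ Icc 0 (1 + δ))) →
        ‖H (s, t)‖ ≤ C) →
      ‖H (s₀, t₀)‖ ≤ C := by
  set ε : ℝ := δ / 8 with hε
  have hε0 : 0 < ε := by positivity
  -- `Y` bounds `|Im ζ|` on the closed region used below
  set Y : ℝ := 1 + 2 / ε with hY
  have hY0 : 0 < Y := by positivity
  refine ⟨Y * 2, by positivity, ?_⟩
  intro H hH C s₀ t₀ hs ht hst hC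
  rcases hs.eq_or_lt with h0 | hs
  · subst h0
    exact hC _ _ (by simpa using by positivity) (by simpa using by positivity)
      (Or.inl ⟨by simp, by simpa using ht, by simp; linarith⟩)
  rcases ht.eq_or_lt with h0 | ht
  · subst h0
    exact hC _ _ (by simpa using by positivity) (by simpa using by positivity)
      (Or.inr ⟨by simp, by simpa using hs.le, by simp; linarith⟩)
  set c : ℝ := s₀ + t₀ - ε * (s₀ - t₀) ^ 2 with hc
  have hc1 : c ≤ 1 := by nlinarith [sq_nonneg (s₀ - t₀)]
  let S : ℂ → ℂ := fun ζ => (c + ζ + ε * ζ ^ 2) / 2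
  let T : ℂ → ℂ := fun ζ => (c - ζ + ε * ζ ^ 2) / 2
  have hSre : ∀ ζ, (S ζ).re = (c + ζ.re + ε * (ζ.re ^ 2 - ζ.im ^ 2)) / 2 := by
    intro ζ; simp [S, pow_two]
  have hTre : ∀ ζ, (T ζ).re = (c - ζ.re + ε * (ζ.re ^ 2 - ζ.im ^ 2)) / 2 := by
    intro ζ; simp [T, pow_two]
  have hSim : ∀ ζ, (S ζ).im = (ζ.im + ε * (2 * ζ.re * ζ.im)) / 2 := by
    intro ζ; simp [S, pow_two]; left; ring
  have hTim : ∀ ζ, (T ζ).im = (-ζ.im + ε * (2 * ζ.re * ζ.im)) / 2 := by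
    intro ζ; simp [T, pow_two]; left; ring
  have hSc : Continuous S := by fun_prop
  have hTc : Continuous T := by fun_prop
  -- The bound on `|Re ζ|` selects the component of `{Re S, Re T > 0}` containing `s₀ - t₀`; the other
  -- zones of that set lie at `|Re ζ|` of order `1 / ε`.
  let D : Set ℂ := {ζ | |ζ.re| < 1 + δ ∧ 0 < (S ζ).re ∧ 0 < (T ζ).re}
  have hDo : IsOpen D :=
    (isOpen_lt Complex.continuous_re.abs continuous_const).inter
      ((isOpen_lt continuous_const (Complex.continuous_re.comp hSc)).inter
        (isOpen_lt continuous_const (Complex.continuous_re.comp hTc)))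
  let D' : Set ℂ := {ζ | |ζ.re| ≤ 1 + δ ∧ 0 ≤ (S ζ).re ∧ 0 ≤ (T ζ).re}
  have hD'c : IsClosed D' :=
    (isClosed_le Complex.continuous_re.abs continuous_const).inter
      ((isClosed_le continuous_const (Complex.continuous_re.comp hSc)).inter
        (isClosed_le continuous_const (Complex.continuous_re.comp hTc)))
  have hDD' : D ⊆ D' := fun ζ h => ⟨h.1.le, h.2.1.le, h.2.2.le⟩
  have him : ∀ ζ ∈ D', |ζ.im| ≤ Y := by
    rintro ζ ⟨h1, h2, h3⟩
    rw [hSre] at h2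
    rw [hTre] at h3
    have hx2 : ζ.re ^ 2 ≤ 4 := by nlinarith [abs_le.1 h1, sq_abs ζ.re, abs_nonneg ζ.re]
    have h4 : ε * ζ.im ^ 2 ≤ 1 + ε * 4 := by nlinarith
    have h5 : ζ.im ^ 2 ≤ 1 / ε + 4 := by
      rw [div_add' _ _ _ hε0.ne', le_div_iff₀ hε0]; linarith
    have h6 : 8 ≤ 1 / ε := by rw [le_div_iff₀ hε0]; linarith
    have h7 : Y = 1 + 2 * (1 / ε) := by rw [hY]; ring
    exact abs_le_of_sq_le_sq (by nlinarith) hY0.le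
  have hbd : Bornology.IsBounded D := by
    refine (isBounded_iff_forall_norm_le.2 ⟨2 + Y, fun ζ hζ => ?_⟩)
    have := him ζ (hDD' hζ)
    have h2 := hζ.1
    linarith [Complex.norm_le_abs_re_add_abs_im ζ]
  have hfr : ∀ ζ ∈ frontier D, ‖H (S ζ, T ζ)‖ ≤ C := by
    intro ζ hζ
    rw [hDo.frontier_eq] at hζ
    have hζ' : ζ ∈ D' := closure_minimal hDD' hD'c hζ.1
    have hi := him ζ hζ'
    obtain ⟨h1, h2, h3⟩ := hζ'
    have hn := hζ.2
    have hre : |ε * (2 * ζ.re * ζ.im)| ≤ Y := by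
      rw [abs_mul, abs_mul, abs_mul, abs_of_pos hε0, abs_of_pos (by norm_num : (0:ℝ) < 2)]
      have : ε * (2 * |ζ.re|) ≤ 1 := by nlinarith [abs_nonneg ζ.re]
      nlinarith [abs_nonneg ζ.im, abs_nonneg ζ.re]
    have hre' := abs_le.1 hre
    have hi' := abs_le.1 hi
    refine hC _ _ ?_ ?_ ?_
    · rw [hSim, abs_le]; constructor <;> linarith
    · rw [hTim, abs_le]; constructor <;> linarith
    have e2 := hSre ζ
    have e3 := hTre ζ
    -- `|Re ζ| = 1 + δ` is impossible: it would force `1 + δ ≤ c + 4 ε ≤ 1 + δ / 2`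
    have hx : |ζ.re| < 1 + δ := by
      refine lt_of_le_of_ne h1 fun he => ?_
      rw [e2] at h2
      rw [e3] at h3
      have hx2 : ζ.re ^ 2 ≤ 4 := by nlinarith [sq_abs ζ.re, abs_nonneg ζ.re]
      have : |ζ.re| ≤ c + ε * 4 := by
        rw [abs_le]; constructor <;> nlinarith [sq_nonneg ζ.im]
      linarith
    have hx' := abs_lt.1 hx
    rcases h2.eq_or_lt with h | h
    · left
      refine ⟨h.symm, h3, ?_⟩
      linarith
    · rcases h3.eq_or_lt with h' | h'
      · right
        refine ⟨h'.symm, h2, ?_⟩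
        linarith
      · exact absurd ⟨hx, h, h'⟩ hn
  have hdiff : Differentiable ℂ (fun ζ => H (S ζ, T ζ)) := by
    refine hH.comp (Differentiable.prodMk ?_ ?_) <;> fun_prop
  have hS0 : S ((s₀ - t₀ : ℝ) : ℂ) = s₀ := by
    simp only [S, hc]; push_cast; ring
  have hT0 : T ((s₀ - t₀ : ℝ) : ℂ) = t₀ := by
    simp only [T, hc]; push_cast; ring
  have hmem : ((s₀ - t₀ : ℝ) : ℂ) ∈ D := by
    refine ⟨?_, ?_, ?_⟩
    · rw [Complex.ofReal_re, abs_lt]; constructor <;> linarith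
    · rw [hS0]; simpa
    · rw [hT0]; simpa
  have := Complex.norm_le_of_forall_mem_frontier_norm_le hbd hdiff.diffContOnCl hfr
    (subset_closure hmem)
  simpa only [hS0, hT0] using this

/-- A limit of entire functions which is uniform near `z` is holomorphic at `z`: by Cauchy's estimate the
derivatives are uniformly Cauchy on a smaller ball. -/
lemma differentiableAt_limit {n : ℕ} {F : ℕ → (Fin n → ℂ) → ℂ} (hF : ∀ k, Differentiable ℂ (F k))
    {g : (Fin n → ℂ) → ℂ} {z : Fin n → ℂ} {r : ℝ} (hr : 0 < r)
    (hC : UniformCauchySeqOn F atTop (ball z r))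
    (hg : ∀ w ∈ ball z r, Tendsto (fun k => F k w) atTop (𝓝 (g w))) :
    DifferentiableAt ℂ g z := by
  have hC' : UniformCauchySeqOn (fun k => fderiv ℂ (F k)) atTop (ball z (r / 2)) := by
    rw [Metric.uniformCauchySeqOn_iff] at hC ⊢
    intro ε hε
    obtain ⟨N, hN⟩ := hC (ε * r / 8) (by positivity)
    refine ⟨N, fun k hk l hl w hw => ?_⟩
    have hsub : ball w (r / 2) ⊆ ball z r := by
      apply ball_subset_ball'
      rw [mem_ball] at hw; linarith
    rw [dist_eq_norm, ← fderiv_sub (hF k w) (hF l w)]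
    have hd : DifferentiableOn ℂ (F k - F l) (ball w (r / 2)) :=
      ((hF k).sub (hF l)).differentiableOn
    have hm : MapsTo (F k - F l) (ball w (r / 2)) (closedBall ((F k - F l) w) (ε * r / 4)) := by
      intro v hv
      have h1 := hN k hk l hl v (hsub hv)
      have h2 := hN k hk l hl w (hsub (mem_ball_self (by positivity)))
      rw [dist_eq_norm] at h1 h2
      rw [mem_closedBall, dist_eq_norm]
      calc ‖(F k - F l) v - (F k - F l) w‖ ≤ ‖F k v - F l v‖ + ‖F k w - F l w‖ := norm_sub_le _ _
        _ ≤ _ := by linarith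
    refine (Complex.norm_fderiv_le_div_of_mapsTo_ball hd hm (by positivity)).trans_lt ?_
    rw [div_lt_iff₀ (by positivity)]
    nlinarith [mul_pos hε hr]
  have hlim : ∀ w, w ∈ ball z (r / 2) → ∃ L, Tendsto (fun k => fderiv ℂ (F k) w) atTop (𝓝 L) :=
    fun w hw => cauchySeq_tendsto_of_complete (hC'.cauchySeq hw)
  choose! g' hg' using hlim
  have hz : z ∈ ball z (r / 2) := mem_ball_self (by positivity)
  exact (hasFDerivAt_of_tendstoUniformlyOn isOpen_ball
    (hC'.tendstoUniformlyOn_of_tendsto hg') (fun k w _ => (hF k w).hasFDerivAt)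
    (fun w hw => hg w (ball_subset_ball (by linarith) hw)) hz).differentiableAt

/-! ### Propagation of convergence to the convex hull -/

/-- An open set `W` that contains the third side of every triangle of which it contains two sides has
convex connected components, hence contains the convex hull of each of its connected subsets. -/
lemma convexHull_subset_of_triangle {E : Type*} [NormedAddCommGroup E] [NormedSpace ℝ E]
    {U W : Set E} (hW : IsOpen W) (hU : IsConnected U) (hUW : U ⊆ W)
    (htri : ∀ a b c, segment ℝ b a ⊆ W → segment ℝ b c ⊆ W → segment ℝ a c ⊆ W) :
    convexHull ℝ U ⊆ W := by
  obtain ⟨x₀, hx₀⟩ := hU.nonempty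
  have hU0 : U ⊆ connectedComponentIn W x₀ := hU.isPreconnected.subset_connectedComponentIn hx₀ hUW
  have hsub : connectedComponentIn W x₀ ⊆ W := connectedComponentIn_subset _ _
  have hseg : ∀ a ∈ connectedComponentIn W x₀, ∀ b ∈ connectedComponentIn W x₀,
      segment ℝ a b ⊆ W := by
    intro a ha b hb
    -- Being joined by a segment inside `W` is a locally true equivalence relation on the component.
    refine isPreconnected_connectedComponentIn.induction₂ (fun x y => segment ℝ x y ⊆ W)
      ?_ ?_ ?_ ha hb
    · intro x hx
      obtain ⟨r, hr, hrW⟩ := Metric.isOpen_iff.1 hW x (hsub hx)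
      filter_upwards [mem_nhdsWithin_of_mem_nhds (ball_mem_nhds x hr)] with y hy
      exact ((convex_ball x r).segment_subset (mem_ball_self hr) hy).trans hrW
    · intro x y z _ _ _ h1 h2
      exact htri x y z (by rwa [segment_symm]) h2
    · intro x y _ _ h
      rwa [segment_symm]
  have hconv : Convex ℝ (connectedComponentIn W x₀) := by
    rw [convex_iff_segment_subset]
    intro a ha b hb
    rw [connectedComponentIn_eq ha]
    exact (convex_segment a b).isPreconnected.subset_connectedComponentIn (left_mem_segment ℝ a b)
      (hseg a ha b hb)
  exact (convexHull_min hU0 hconv).trans hsub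

variable {n : ℕ}

/-- The part of the tube over `S` where every coordinate has imaginary part at most `R` in
absolute value. -/
def slab (S : Set (Fin n → ℝ)) (R : ℝ) : Set (Fin n → ℂ) :=
  {z | (fun i => (z i).re) ∈ S ∧ ∀ i, |(z i).im| ≤ R}

/-- The sequence `F` is uniformly Cauchy on every truncation of the tube over `S`. -/
def Good (F : ℕ → (Fin n → ℂ) → ℂ) (S : Set (Fin n → ℝ)) : Prop :=
  ∀ R, UniformCauchySeqOn F atTop (slab S R)

/-- The points of `ℝⁿ` near which `F` is uniformly Cauchy on all truncated tubes. -/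
def goodSet (F : ℕ → (Fin n → ℂ) → ℂ) : Set (Fin n → ℝ) :=
  {x | ∃ r > 0, Good F (ball x r)}

section GoodSet

variable {F : ℕ → (Fin n → ℂ) → ℂ}

lemma Good.mono {S T : Set (Fin n → ℝ)} (h : Good F T) (hST : S ⊆ T) : Good F S :=
  fun R => (h R).mono fun _ hz => ⟨hST hz.1, hz.2⟩

lemma Good.union {S T : Set (Fin n → ℝ)} (hS : Good F S) (hT : Good F T) : Good F (S ∪ T) := by
  intro R
  have h1 := Metric.uniformCauchySeqOn_iff.1 (hS R)
  have h2 := Metric.uniformCauchySeqOn_iff.1 (hT R)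
  refine Metric.uniformCauchySeqOn_iff.2 fun ε hε => ?_
  obtain ⟨N, hN⟩ := h1 ε hε
  obtain ⟨M, hM⟩ := h2 ε hε
  refine ⟨max N M, fun k hk l hl z hz => ?_⟩
  rcases hz.1 with h | h
  · exact hN k (le_of_max_le_left hk) l (le_of_max_le_left hl) z ⟨h, hz.2⟩
  · exact hM k (le_of_max_le_right hk) l (le_of_max_le_right hl) z ⟨h, hz.2⟩

lemma isOpen_goodSet : IsOpen (goodSet F) := by
  rw [Metric.isOpen_iff]
  rintro x ⟨r, hr, h⟩
  refine ⟨r / 2, by positivity, fun y hy => ⟨r / 2, by positivity, h.mono ?_⟩⟩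
  apply ball_subset_ball'
  rw [mem_ball] at hy; linarith

lemma exists_good_thickening {L : Set (Fin n → ℝ)} (hL : IsCompact L) (hLW : L ⊆ goodSet F) :
    ∃ δ > 0, Good F (thickening δ L) := by
  have : ∃ V, IsOpen V ∧ L ⊆ V ∧ Good F V := by
    refine hL.induction_on (p := fun s => ∃ V, IsOpen V ∧ s ⊆ V ∧ Good F V) ?_ ?_ ?_ ?_
    · refine ⟨∅, isOpen_empty, Subset.rfl, fun R => ?_⟩
      exact Metric.uniformCauchySeqOn_iff.2 fun ε _ => ⟨0, fun _ _ _ _ z hz => hz.1.elim⟩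
    · rintro s t hst ⟨V, h1, h2, h3⟩
      exact ⟨V, h1, hst.trans h2, h3⟩
    · rintro s t ⟨V, h1, h2, h3⟩ ⟨V', h1', h2', h3'⟩
      exact ⟨V ∪ V', h1.union h1', union_subset_union h2 h2', h3.union h3'⟩
    · intro x hx
      obtain ⟨r, hr, h⟩ := hLW hx
      exact ⟨ball x r, mem_nhdsWithin_of_mem_nhds (ball_mem_nhds x hr), _, isOpen_ball,
        Subset.rfl, h⟩
  obtain ⟨V, hV, hLV, hg⟩ := this
  obtain ⟨δ, hδ, h⟩ := hL.exists_thickening_subset_open hV hLV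
  exact ⟨δ, hδ, hg.mono h⟩

/-- The ray from `b` through `b + v`, prolonged by the factor `1 + δ`, stays within `δ ‖v‖` of the
segment. -/
lemma dist_ray_segment {b v : Fin n → ℝ} {δ τ : ℝ} (hδ : 0 ≤ δ) (hτ : τ ∈ Icc 0 (1 + δ)) :
    ∃ q ∈ segment ℝ b (b + v), ‖b + τ • v - q‖ ≤ δ * ‖v‖ := by
  refine ⟨b + (min τ 1) • v, ?_, ?_⟩
  · rw [segment_eq_image']
    exact ⟨min τ 1, ⟨le_min hτ.1 zero_le_one, min_le_right _ _⟩, by simp⟩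
  · rw [add_sub_add_left_eq_sub, ← sub_smul, norm_smul]
    refine mul_le_mul_of_nonneg_right ?_ (norm_nonneg _)
    rw [Real.norm_eq_abs, abs_le]
    have := hτ.2
    rcases le_total τ 1 with h | h
    · rw [min_eq_left h]; constructor <;> linarith
    · rw [min_eq_right h]; constructor <;> linarith

/-- The triangle property of the good set: `disc` is applied to the differences `F k - F l` on the
complex affine planes through the points `z` spanned by `a - b` and `c - b`. -/
lemma goodSet_triangle (hF : ∀ k, Differentiable ℂ (F k)) (a b c : Fin n → ℝ)
    (hba : segment ℝ b a ⊆ goodSet F) (hbc : segment ℝ b c ⊆ goodSet F) :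
    segment ℝ a c ⊆ goodSet F := by
  have hcomp : ∀ x y : Fin n → ℝ, IsCompact (segment ℝ x y) := fun x y => by
    rw [segment_eq_image]
    exact isCompact_Icc.image (by fun_prop)
  obtain ⟨δ, hδ, hgood⟩ := exists_good_thickening ((hcomp b a).union (hcomp b c))
    (union_subset hba hbc)
  rintro p ⟨s₀, t₀, hs, ht, hst, hp⟩
  refine ⟨δ / 2, by positivity, fun R => ?_⟩
  set u := a - b with hu
  set v := c - b with hv
  have hA : 0 < ‖u‖ + ‖v‖ + 1 := by positivity
  set A := ‖u‖ + ‖v‖ + 1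
  have huA : ‖u‖ ≤ A := by have := norm_nonneg v; simp only [A]; linarith
  have hvA : ‖v‖ ≤ A := by have := norm_nonneg u; simp only [A]; linarith
  set δ' := min 1 (δ / (2 * A)) with hδ'
  have hδ'0 : 0 < δ' := lt_min one_pos (by positivity)
  have hδ'A : δ' * A ≤ δ / 2 := by
    calc δ' * A ≤ δ / (2 * A) * A := mul_le_mul_of_nonneg_right (min_le_right _ _) hA.le
      _ = δ / 2 := by field_simp
  obtain ⟨R₁, hR₁, hdisc⟩ := disc hδ'0 (min_le_left _ _)
  have hC := Metric.uniformCauchySeqOn_iff.1 (hgood (R + R₁ * (2 * A)))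
  refine Metric.uniformCauchySeqOn_iff.2 fun ε hε => ?_
  obtain ⟨N, hN⟩ := hC (ε / 2) (by positivity)
  refine ⟨N, fun k hk l hl z hz => ?_⟩
  have hpe : p = b + s₀ • u + t₀ • v := by
    rw [← hp, hu, hv]
    have : s₀ = 1 - t₀ := by linarith
    subst this
    module
  have key := hdisc
    (fun q => F k (fun i => z i + (q.1 - s₀) * u i + (q.2 - t₀) * v i) -
      F l (fun i => z i + (q.1 - s₀) * u i + (q.2 - t₀) * v i))
    (by
      refine Differentiable.sub ((hF k).comp ?_) ((hF l).comp ?_) <;>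
      · rw [differentiable_pi]; intro i; fun_prop)
    (ε / 2) s₀ t₀ hs ht hst.le ?_
  · simp only [sub_self, zero_mul, add_zero] at key
    rw [dist_eq_norm]
    linarith
  intro s t hsi hti hcase
  have hmem : (fun i => z i + (s - s₀) * u i + (t - t₀) * v i) ∈
      slab (thickening δ (segment ℝ b a ∪ segment ℝ b c)) (R + R₁ * (2 * A)) := by
    constructor
    · have hz1 := hz.1
      rw [mem_ball, dist_eq_norm] at hz1
      set x : Fin n → ℝ := fun i => (z i).re with hx
      have hre : (fun i => (z i + (s - s₀) * u i + (t - t₀) * v i).re) =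
          (x - p) + (b + s.re • u + t.re • v) := by
        funext i
        rw [hpe]
        simp [hx]
        ring
      have hua : b + u = a := by rw [hu]; abel
      have hvc : b + v = c := by rw [hv]; abel
      have hq : ∃ q ∈ segment ℝ b a ∪ segment ℝ b c, ‖b + s.re • u + t.re • v - q‖ ≤ δ' * A := by
        rcases hcase with ⟨h0, h1⟩ | ⟨h0, h1⟩
        · obtain ⟨q, hq, hqn⟩ := dist_ray_segment (b := b) (v := v) hδ'0.le h1
          refine ⟨q, Or.inr (hvc ▸ hq), ?_⟩
          rw [h0, zero_smul, add_zero]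
          exact hqn.trans (mul_le_mul_of_nonneg_left hvA hδ'0.le)
        · obtain ⟨q, hq, hqn⟩ := dist_ray_segment (b := b) (v := u) hδ'0.le h1
          refine ⟨q, Or.inl (hua ▸ hq), ?_⟩
          rw [h0, zero_smul, add_zero]
          exact hqn.trans (mul_le_mul_of_nonneg_left huA hδ'0.le)
      obtain ⟨q, hq, hqn⟩ := hq
      rw [hre, mem_thickening_iff]
      refine ⟨q, hq, ?_⟩
      rw [dist_eq_norm, add_sub_assoc]
      exact (norm_add_le _ _).trans_lt (by linarith)
    · intro i
      have hu' : |u i| ≤ A := (norm_le_pi_norm u i).trans huA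
      have hv' : |v i| ≤ A := (norm_le_pi_norm v i).trans hvA
      have him : (z i + (s - s₀) * u i + (t - t₀) * v i).im =
          (z i).im + (s.im * u i + t.im * v i) := by
        simp; ring
      rw [him]
      have h1 : |s.im * u i| ≤ R₁ * A := by
        rw [abs_mul]; exact mul_le_mul hsi hu' (abs_nonneg _) hR₁
      have h2 : |t.im * v i| ≤ R₁ * A := by
        rw [abs_mul]; exact mul_le_mul hti hv' (abs_nonneg _) hR₁
      have h3 := abs_add_le (z i).im (s.im * u i + t.im * v i)
      have h4 := abs_add_le (s.im * u i) (t.im * v i)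
      have h5 := hz.2 i
      linarith
  have := hN k hk l hl _ hmem
  rw [dist_eq_norm] at this
  exact this.le

/-- If a sequence of entire functions is locally (in the base) uniformly Cauchy over a connected `U`, then
it converges to a holomorphic function on the whole tube over the convex hull of `U`. -/
theorem exists_limit_on_hull (hF : ∀ k, Differentiable ℂ (F k)) {U : Set (Fin n → ℝ)}
    (hU : IsConnected U) (hUF : U ⊆ goodSet F) :
    ∃ g : (Fin n → ℂ) → ℂ,
      DifferentiableOn ℂ g {z : Fin n → ℂ | (fun i => (z i).re) ∈ convexHull ℝ U} ∧
      ∀ z ∈ {z : Fin n → ℂ | (fun i => (z i).re) ∈ convexHull ℝ U},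
        Tendsto (fun k => F k z) atTop (𝓝 (g z)) := by
  have hsub := convexHull_subset_of_triangle isOpen_goodSet hU hUF (goodSet_triangle hF)
  have hloc : ∀ z : Fin n → ℂ, (fun i => (z i).re) ∈ goodSet F →
      ∃ r > 0, UniformCauchySeqOn F atTop (ball z r) := by
    rintro z ⟨r, hr, hg⟩
    refine ⟨r, hr, (hg (‖z‖ + r)).mono fun w hw => ?_⟩
    rw [mem_ball, dist_eq_norm] at hw
    refine ⟨?_, fun i => ?_⟩
    · rw [mem_ball, dist_eq_norm, pi_norm_lt_iff hr]
      intro i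
      have h1 : |((w - z) i).re| ≤ ‖(w - z) i‖ := Complex.abs_re_le_norm _
      have h2 := norm_le_pi_norm (w - z) i
      simp only [Pi.sub_apply, Real.norm_eq_abs, Complex.sub_re] at h1 h2 ⊢
      linarith
    · have h1 : |(w i).im| ≤ ‖w i‖ := Complex.abs_im_le_norm _
      have h2 := norm_le_pi_norm w i
      have h3 := norm_le_norm_add_norm_sub z w
      rw [norm_sub_rev] at h3
      linarith
  refine ⟨fun z => limUnder atTop (fun k => F k z), fun z hz => ?_, fun z hz => ?_⟩
  · obtain ⟨r, hr, hC⟩ := hloc z (hsub hz)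
    exact (differentiableAt_limit hF hr hC
      fun w hw => (hC.cauchySeq hw).tendsto_limUnder).differentiableWithinAt
  · obtain ⟨r, hr, hC⟩ := hloc z (hsub hz)
    exact (hC.cauchySeq (mem_ball_self hr)).tendsto_limUnder

end GoodSet

/-! ### Gaussian kernels and the slice-shift formula -/

/-- The point `x + i y` of `ℂⁿ`. -/
def cpt (x y : Fin n → ℝ) : Fin n → ℂ := fun i => x i + y i * Complex.I

/-- The tube over `U`. -/
def tube (U : Set (Fin n → ℝ)) : Set (Fin n → ℂ) := {z | (fun i => (z i).re) ∈ U}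

/-- The Gaussian kernel `exp (m² ∑ (zᵢ - wᵢ)²)`, which decays in `m` when the imaginary
part of `z - w` dominates its real part. -/
noncomputable def ker (m : ℕ) (z w : Fin n → ℂ) : ℂ :=
  Complex.exp ((m : ℂ) ^ 2 * ∑ i, (z i - w i) ^ 2)

/-- The cube `[-k, k]ⁿ`. -/
def cube (n : ℕ) (k : ℝ) : Set (Fin n → ℝ) := Icc (fun _ => -k) (fun _ => k)

/-- The integral of `f` against the Gaussian kernel over the slice `b + i [-k, k]ⁿ`. -/
noncomputable def gint (f : (Fin n → ℂ) → ℂ) (k : ℝ) (m : ℕ) (b : Fin n → ℝ) (z : Fin n → ℂ) : ℂ :=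
  ∫ y in cube n k, f (cpt b y) * ker m z (cpt b y)

lemma continuous_cpt : Continuous fun p : (Fin n → ℝ) × (Fin n → ℝ) => cpt p.1 p.2 := by
  unfold cpt; fun_prop

lemma continuous_cpt' (b : Fin n → ℝ) : Continuous (cpt b) := by
  unfold cpt; fun_prop

lemma cpt_re (x y : Fin n → ℝ) : (fun i => (cpt x y i).re) = x := by
  funext i; simp [cpt]

lemma cpt_mem {U : Set (Fin n → ℝ)} {x : Fin n → ℝ} (hx : x ∈ U) (y : Fin n → ℝ) :
    cpt x y ∈ tube U := by
  simpa [tube, cpt_re] using hx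

lemma isOpen_tube {U : Set (Fin n → ℝ)} (hU : IsOpen U) : IsOpen (tube U) := by
  have : Continuous fun z : Fin n → ℂ => fun i => (z i).re := by fun_prop
  exact hU.preimage this

lemma norm_ker (m : ℕ) (z : Fin n → ℂ) (x y : Fin n → ℝ) :
    ‖ker m z (cpt x y)‖ =
      Real.exp ((m : ℝ) ^ 2 * ∑ i, (((z i).re - x i) ^ 2 - ((z i).im - y i) ^ 2)) := by
  have : (m : ℂ) ^ 2 = (((m : ℝ) ^ 2 : ℝ) : ℂ) := by push_cast; rfl
  rw [ker, Complex.norm_exp, this, Complex.re_ofReal_mul, Complex.re_sum]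
  congr 2
  refine Finset.sum_congr rfl fun i _ => ?_
  simp [cpt, pow_two]

lemma continuous_ker (m : ℕ) :
    Continuous fun p : (Fin n → ℂ) × (Fin n → ℂ) => ker m p.1 p.2 := by
  unfold ker; fun_prop

lemma isCompact_cube (k : ℝ) : IsCompact (cube n k) := isCompact_Icc

lemma exists_bound {U : Set (Fin n → ℝ)} {f : (Fin n → ℂ) → ℂ}
    (hf : ContinuousOn f (tube U)) {B : Set (Fin n → ℝ)} (hB : IsCompact B) (hBU : B ⊆ U) (k : ℝ) :
    ∃ M, 0 ≤ M ∧ ∀ x ∈ B, ∀ y ∈ cube n k, ‖f (cpt x y)‖ ≤ M := by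
  have hc : IsCompact ((fun p : (Fin n → ℝ) × (Fin n → ℝ) => cpt p.1 p.2) '' (B ×ˢ cube n k)) :=
    (hB.prod (isCompact_cube k)).image continuous_cpt
  have hs : ((fun p : (Fin n → ℝ) × (Fin n → ℝ) => cpt p.1 p.2) '' (B ×ˢ cube n k)) ⊆ tube U := by
    rintro _ ⟨p, hp, rfl⟩
    exact cpt_mem (hBU hp.1) _
  obtain ⟨M, hM⟩ := hc.exists_bound_of_continuousOn (hf.mono hs)
  refine ⟨max M 0, le_max_right _ _, fun x hx y hy => (hM _ ⟨(x, y), ⟨hx, hy⟩, rfl⟩).trans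
    (le_max_left _ _)⟩

/-- The divergence theorem on `[0,1] × [-k,k]ⁿ` applied to the closed `n`-form `G dw₁ ⋯ dwₙ`:
the integrals over the slices above `a` and `a + v` differ by lateral face terms. -/
lemma slice_sub_slice {U : Set (Fin n → ℝ)} (hU : IsOpen U) {G : (Fin n → ℂ) → ℂ}
    (hG : DifferentiableOn ℂ G (tube U)) {a v : Fin n → ℝ} {k : ℝ} (hk : 0 ≤ k)
    (hseg : ∀ t ∈ Icc (0:ℝ) 1, a + t • v ∈ U) {K : ℝ}
    (hK : ∀ t ∈ Icc (0:ℝ) 1, ∀ y ∈ cube n k, (∃ j, |y j| = k) → ‖G (cpt (a + t • v) y)‖ ≤ K) :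
    ‖(∫ y in cube n k, G (cpt (a + v) y)) - ∫ y in cube n k, G (cpt a y)‖ ≤
      ∑ j : Fin n, ‖v‖ * (2 * (K * volume.real
        (Icc (fun i => (Fin.cons 0 (fun _ => -k) : Fin (n + 1) → ℝ) (j.succ.succAbove i))
          (fun i => (Fin.cons 1 (fun _ => k) : Fin (n + 1) → ℝ) (j.succ.succAbove i))))) := by
  set lo : Fin (n + 1) → ℝ := Fin.cons 0 (fun _ => -k) with hlo
  set hi : Fin (n + 1) → ℝ := Fin.cons 1 (fun _ => k) with hhi
  have hle : lo ≤ hi := by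
    intro i
    refine Fin.cases ?_ (fun j => ?_) i
    · simp [hlo, hhi]
    · simp [hlo, hhi]; linarith
  let P' : (Fin (n + 1) → ℝ) →L[ℝ] (Fin n → ℂ) := ContinuousLinearMap.pi fun i =>
    (ContinuousLinearMap.proj (R := ℝ) (φ := fun _ : Fin (n + 1) => ℝ) 0).smulRight (v i : ℂ) +
      (ContinuousLinearMap.proj (R := ℝ) (φ := fun _ : Fin (n + 1) => ℝ) i.succ).smulRight
        Complex.I
  have hP'a : ∀ X i, P' X i = X 0 * v i + X i.succ * Complex.I := by
    intro X i; simp [P']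
  let P : (Fin (n + 1) → ℝ) → (Fin n → ℂ) := fun X => cpt a 0 + P' X
  have hPd : ∀ X, HasFDerivAt P P' X := fun X => P'.hasFDerivAt.const_add _
  have hPe : ∀ X, P X = cpt (a + X 0 • v) (Fin.tail X) := by
    intro X; funext i
    simp only [P, Pi.add_apply, hP'a, cpt, Fin.tail]
    simp; ring
  have hPmem : ∀ X ∈ Icc lo hi, P X ∈ tube U := by
    intro X hX
    rw [hPe]
    refine cpt_mem (hseg _ ⟨?_, ?_⟩) _
    · simpa [hlo] using hX.1 0
    · simpa [hhi] using hX.2 0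
  -- The vector field is `co i * G (P X)`, and it is divergence free by the Cauchy-Riemann equations:
  -- `∂G/∂t = ∑ vⱼ ∂G/∂wⱼ` and `∂G/∂yⱼ = i ∂G/∂wⱼ`.
  let co : Fin (n + 1) → ℂ := Fin.cons 1 (fun j => Complex.I * v j)
  let L : (Fin (n + 1) → ℝ) → ((Fin n → ℂ) →L[ℂ] ℂ) := fun X => fderiv ℂ G (P X)
  have hsum : ∀ X, ∑ i, (co i • ((L X).restrictScalars ℝ ∘L P')) (Pi.single i 1) = 0 := by
    intro X
    have h1 : ∀ i, (co i • ((L X).restrictScalars ℝ ∘L P')) (Pi.single i 1) =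
        L X (co i • P' (Pi.single i 1)) := by
      intro i; simp
    simp_rw [h1, ← map_sum]
    convert (L X).map_zero using 2
    funext l
    rw [Finset.sum_apply, Fin.sum_univ_succ]
    simp only [Pi.smul_apply, hP'a, co, Fin.cons_zero, Fin.cons_succ, smul_eq_mul]
    rw [Finset.sum_eq_single l]
    · simp
      ring_nf
      simp
    · intro j _ hj
      simp [Fin.succ_ne_zero, hj.symm]
    · simp
  have hcont : ContinuousOn (fun X => G (P X)) (Icc lo hi) :=
    hG.continuousOn.comp (fun X _ => (hPd X).continuousAt.continuousWithinAt) hPmem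
  have hdiv := integral_divergence_of_hasFDerivAt_off_countable' lo hi hle
    (fun i X => co i * G (P X)) (fun i X => co i • ((L X).restrictScalars ℝ ∘L P')) ∅
    countable_empty (fun i => continuousOn_const.mul hcont)
    (by
      intro X hX i
      have hX' : X ∈ Icc lo hi :=
        ⟨fun i => (hX.1 i (mem_univ _)).1.le, fun i => (hX.1 i (mem_univ _)).2.le⟩
      have hd : HasFDerivAt G (L X) (P X) :=
        ((hG _ (hPmem X hX')).differentiableAt ((isOpen_tube hU).mem_nhds (hPmem X hX'))).hasFDerivAt
      exact ((hd.restrictScalars ℝ).comp X (hPd X)).const_mul (co i))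
    (by
      simp_rw [hsum]
      exact integrableOn_zero)
  simp_rw [hsum, integral_zero] at hdiv
  rw [Fin.sum_univ_succ] at hdiv
  have hface : Icc (lo ∘ (0 : Fin (n+1)).succAbove) (hi ∘ (0 : Fin (n+1)).succAbove) = cube n k := by
    simp [cube, hlo, hhi, Function.comp_def]
  have h1 : ∀ y : Fin n → ℝ, P ((0 : Fin (n + 1)).insertNth (hi 0) y) = cpt (a + v) y := by
    intro y; rw [hPe]; simp [hhi]
  have h0 : ∀ y : Fin n → ℝ, P ((0 : Fin (n + 1)).insertNth (lo 0) y) = cpt a y := by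
    intro y; rw [hPe]; simp [hlo]
  have hco0 : co 0 = 1 := rfl
  simp only [hface, h1, h0, hco0, one_mul] at hdiv
  have hdiv' := eq_neg_of_add_eq_zero_left hdiv.symm
  rw [hdiv', norm_neg]
  refine (norm_sum_le _ _).trans (Finset.sum_le_sum fun j _ => ?_)
  have hcoj : ‖co j.succ‖ ≤ ‖v‖ := by
    have : co j.succ = Complex.I * v j := rfl
    rw [this, norm_mul, Complex.norm_I, one_mul, Complex.norm_real]
    exact norm_le_pi_norm v j
  have hbd : ∀ c : ℝ, |c| = k → lo j.succ ≤ c → c ≤ hi j.succ →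
      ‖∫ y in Icc (lo ∘ j.succ.succAbove) (hi ∘ j.succ.succAbove),
        co j.succ * G (P (j.succ.insertNth c y))‖ ≤
      ‖v‖ * (K * volume.real (Icc (lo ∘ j.succ.succAbove) (hi ∘ j.succ.succAbove))) := by
    intro c hc hcl hch
    rw [integral_const_mul, norm_mul]
    refine mul_le_mul hcoj ?_ (norm_nonneg _) (norm_nonneg _)
    refine norm_setIntegral_le_of_norm_le_const isCompact_Icc.measure_lt_top fun y hy => ?_
    have hm : j.succ.insertNth c y ∈ Icc lo hi := Fin.insertNth_mem_Icc.2 ⟨⟨hcl, hch⟩, hy⟩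
    rw [hPe]
    refine hK _ ⟨?_, ?_⟩ _ ⟨fun i => ?_, fun i => ?_⟩ ⟨j, ?_⟩
    · simpa [hlo] using hm.1 0
    · simpa [hhi] using hm.2 0
    · simpa [hlo, Fin.tail] using hm.1 i.succ
    · simpa [hhi, Fin.tail] using hm.2 i.succ
    · simp [Fin.tail, hc]
  have hlj : lo j.succ = -k := by simp [hlo]
  have hhj : hi j.succ = k := by simp [hhi]
  refine (norm_sub_le _ _).trans ?_
  have e1 := hbd (hi j.succ) (by rw [hhj, abs_of_nonneg hk]) (hle _) le_rfl
  have e2 := hbd (lo j.succ) (by rw [hlj, abs_neg, abs_of_nonneg hk]) le_rfl (hle _)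
  simp only [Function.comp_def] at e1 e2 ⊢
  linarith

/-! ### Dependence of the regularisation on the slice -/

lemma differentiable_ker (m : ℕ) (z : Fin n → ℂ) : Differentiable ℂ (ker m z) := by
  unfold ker; fun_prop

/-- On the lateral faces of the cube the kernel is at most `exp (-m²)`: some coordinate of `Im (z - w)` is
at least `k - R` there, and this outweighs the real part of `z - w`. -/
lemma norm_ker_face {U : Set (Fin n → ℝ)} {D R k : ℝ} (hD : ∀ x ∈ U, ‖x‖ ≤ D) (hRk : R ≤ k)
    (hk : n * (2 * D) ^ 2 + 1 ≤ (k - R) ^ 2) (m : ℕ) {z : Fin n → ℂ} (hz : z ∈ slab U R)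
    {x y : Fin n → ℝ} (hx : x ∈ U) (hy : ∃ j, |y j| = k) :
    ‖ker m z (cpt x y)‖ ≤ Real.exp (-(m : ℝ) ^ 2) := by
  obtain ⟨j, hj⟩ := hy
  rw [norm_ker, Real.exp_le_exp, Finset.sum_sub_distrib]
  have h1 : ∑ i, ((z i).re - x i) ^ 2 ≤ n * (2 * D) ^ 2 := by
    calc ∑ i, ((z i).re - x i) ^ 2 ≤ ∑ _i : Fin n, (2 * D) ^ 2 := by
          refine Finset.sum_le_sum fun i _ => ?_
          have e1 := abs_le.1 ((norm_le_pi_norm (fun i => (z i).re) i).trans (hD _ hz.1))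
          have e2 := abs_le.1 ((norm_le_pi_norm x i).trans (hD _ hx))
          exact sq_le_sq' (by linarith) (by linarith)
      _ = n * (2 * D) ^ 2 := by simp
  have h2 : (k - R) ^ 2 ≤ ∑ i, ((z i).im - y i) ^ 2 := by
    refine le_trans ?_ (Finset.single_le_sum (f := fun i => ((z i).im - y i) ^ 2)
      (fun i _ => sq_nonneg _) (Finset.mem_univ j))
    have e1 := hz.2 j
    have e2 := abs_sub_abs_le_abs_sub (y j) (z j).im
    rw [abs_sub_comm] at e2
    rw [← sq_abs ((z j).im - y j)]
    exact pow_le_pow_left₀ (by linarith) (by linarith) 2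
  nlinarith [sq_nonneg (m : ℝ)]

/-- Moving the slice inside a compact convex part of the base changes the Gaussian integral by
`O (exp (-m²))`, uniformly in `z`. -/
lemma gint_shift {U : Set (Fin n → ℝ)} (hU : IsOpen U) {f : (Fin n → ℂ) → ℂ}
    (hf : DifferentiableOn ℂ f (tube U)) {D R k : ℝ} (hD : ∀ x ∈ U, ‖x‖ ≤ D) (hk0 : 0 ≤ k)
    (hRk : R ≤ k) (hk : n * (2 * D) ^ 2 + 1 ≤ (k - R) ^ 2) {B : Set (Fin n → ℝ)}
    (hB : IsCompact B) (hBc : Convex ℝ B) (hBU : B ⊆ U) :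
    ∃ C, ∀ a ∈ B, ∀ b ∈ B, ∀ m : ℕ, ∀ z ∈ slab U R,
      ‖gint f k m b z - gint f k m a z‖ ≤ C * Real.exp (-(m : ℝ) ^ 2) := by
  obtain ⟨M, hM0, hM⟩ := exists_bound hf.continuousOn hB hBU k
  refine ⟨∑ j : Fin n, (2 * D) * (2 * (M * volume.real
        (Icc (fun i => (Fin.cons 0 (fun _ => -k) : Fin (n + 1) → ℝ) (j.succ.succAbove i))
          (fun i => (Fin.cons 1 (fun _ => k) : Fin (n + 1) → ℝ) (j.succ.succAbove i))))), ?_⟩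
  intro a ha b hb m z hz
  have hseg : ∀ t ∈ Icc (0:ℝ) 1, a + t • (b - a) ∈ B := fun t ht =>
    hBc.add_smul_sub_mem ha hb ht
  have := slice_sub_slice hU (G := fun w => f w * ker m z w)
    (hf.mul (differentiable_ker m z).differentiableOn) (a := a) (v := b - a) hk0
    (fun t ht => hBU (hseg t ht)) (K := M * Real.exp (-(m : ℝ) ^ 2))
    (fun t ht y hy hj => by
      rw [norm_mul]
      exact mul_le_mul (hM _ (hseg t ht) y hy)
        (norm_ker_face hD hRk hk m hz (hBU (hseg t ht)) hj) (norm_nonneg _) hM0)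
  rw [add_sub_cancel] at this
  refine this.trans ?_
  rw [Finset.sum_mul]
  refine Finset.sum_le_sum fun j _ => ?_
  have hv : ‖b - a‖ ≤ 2 * D := by
    have := norm_sub_le b a
    linarith [hD a (hBU ha), hD b (hBU hb)]
  rw [mul_assoc (2 * D)]
  refine mul_le_mul hv (le_of_eq (by ring)) ?_ ((norm_nonneg _).trans hv)
  have := Real.exp_pos (-(m : ℝ) ^ 2)
  positivity

/-- The Gaussian integral over `ℝⁿ`. -/
noncomputable def gaussJ (n : ℕ) : ℝ := ∫ u : Fin n → ℝ, Real.exp (-∑ i, u i ^ 2)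

lemma exp_neg_sum (u : Fin n → ℝ) :
    Real.exp (-∑ i, u i ^ 2) = ∏ i, Real.exp (-1 * (u i) ^ 2) := by
  rw [← Real.exp_sum, ← Finset.sum_neg_distrib]; simp

lemma gaussJ_pos (n : ℕ) : 0 < gaussJ n := by
  unfold gaussJ
  simp_rw [exp_neg_sum]
  rw [integral_fintype_prod_volume_eq_pow (fun x : ℝ => Real.exp (-1 * x ^ 2)), integral_gaussian]
  have := Real.pi_pos
  positivity

lemma integrable_gauss : Integrable fun u : Fin n → ℝ => Real.exp (-∑ i, u i ^ 2) := by
  simp_rw [exp_neg_sum]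
  exact Integrable.fintype_prod (f := fun _ (x : ℝ) => Real.exp (-1 * x ^ 2))
    (fun _ => integrable_exp_neg_mul_sq one_pos)

/-- The normalised Gaussian regularisation of `f` along the slice above `b`. -/
noncomputable def approx (f : (Fin n → ℂ) → ℂ) (k : ℝ) (m : ℕ) (b : Fin n → ℝ) (z : Fin n → ℂ) :
    ℂ := ((m : ℂ) ^ n / gaussJ n) * gint f k m b z

/-- After normalisation the dependence on the slice still disappears in the limit, uniformly over the
truncated tube. -/
lemma approx_shift {U : Set (Fin n → ℝ)} (hU : IsOpen U) {f : (Fin n → ℂ) → ℂ}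
    (hf : DifferentiableOn ℂ f (tube U)) {D R k : ℝ} (hD : ∀ x ∈ U, ‖x‖ ≤ D) (hk0 : 0 ≤ k)
    (hRk : R ≤ k) (hk : n * (2 * D) ^ 2 + 1 ≤ (k - R) ^ 2) {B : Set (Fin n → ℝ)}
    (hB : IsCompact B) (hBc : Convex ℝ B) (hBU : B ⊆ U) {ε : ℝ} (hε : 0 < ε) :
    ∀ᶠ m : ℕ in atTop, ∀ a ∈ B, ∀ b ∈ B, ∀ z ∈ slab U R,
      ‖approx f k m b z - approx f k m a z‖ < ε := by
  obtain ⟨C, hC⟩ := gint_shift hU hf hD hk0 hRk hk hB hBc hBU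
  have hJ := gaussJ_pos n
  have hlim : Tendsto (fun m : ℕ => (|C| / gaussJ n) * ((m : ℝ) ^ n * Real.exp (-(m : ℝ)))) atTop
      (𝓝 0) := by
    simpa using ((Real.tendsto_pow_mul_exp_neg_atTop_nhds_zero n).comp
      tendsto_natCast_atTop_atTop).const_mul (|C| / gaussJ n)
  filter_upwards [hlim.eventually_lt_const hε] with m hm a ha b hb z hz
  refine lt_of_le_of_lt ?_ hm
  have hmm : Real.exp (-(m : ℝ) ^ 2) ≤ Real.exp (-(m : ℝ)) := by
    rw [Real.exp_le_exp, neg_le_neg_iff]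
    exact_mod_cast Nat.le_self_pow two_ne_zero m
  have hn : ‖((m : ℂ) ^ n / gaussJ n)‖ = (m : ℝ) ^ n / gaussJ n := by
    rw [norm_div, norm_pow, Complex.norm_natCast, Complex.norm_real, Real.norm_of_nonneg hJ.le]
  rw [approx, approx, ← mul_sub, norm_mul, hn]
  calc (m : ℝ) ^ n / gaussJ n * ‖gint f k m b z - gint f k m a z‖
      ≤ (m : ℝ) ^ n / gaussJ n * (|C| * Real.exp (-(m : ℝ))) := by
        refine mul_le_mul_of_nonneg_left ((hC a ha b hb m z hz).trans ?_) (by positivity)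
        exact mul_le_mul (le_abs_self C) hmm (Real.exp_pos _).le (abs_nonneg _)
    _ = _ := by ring

/-- For `z` on the slice itself, rescaling around `Im z` turns the integral into an average of `f` against
a fixed Gaussian. -/
lemma gint_eq_gauss (f : (Fin n → ℂ) → ℂ) (k : ℝ) {m : ℕ} (hm : 0 < m) (x η : Fin n → ℝ) :
    (m : ℂ) ^ n * gint f k m x (cpt x η) =
      ∫ u : Fin n → ℝ, (cube n k).indicator (fun y => f (cpt x y)) (η + (m : ℝ)⁻¹ • u) *
        Real.exp (-∑ i, u i ^ 2) := by
  have hm' : (m : ℝ) ≠ 0 := by positivity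
  set Φ : (Fin n → ℝ) → ℂ := fun y => (cube n k).indicator (fun y => f (cpt x y)) y *
    Real.exp (-∑ i, (m : ℝ) ^ 2 * (y i - η i) ^ 2) with hΦ
  have h1 : gint f k m x (cpt x η) = ∫ y, Φ y := by
    rw [gint, ← integral_indicator (isCompact_cube k).measurableSet]
    refine integral_congr_ae (Eventually.of_forall fun y => ?_)
    simp only [hΦ]
    by_cases hy : y ∈ cube n k
    · rw [indicator_of_mem hy, indicator_of_mem hy, ker]
      push_cast
      rw [Finset.mul_sum, ← Finset.sum_neg_distrib]
      congr 2
      refine Finset.sum_congr rfl fun i _ => ?_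
      simp only [cpt]
      linear_combination (m : ℂ) ^ 2 * ((y i : ℂ) - η i) ^ 2 * Complex.I_sq
    · rw [indicator_of_notMem hy, indicator_of_notMem hy, zero_mul]
  have h2 : ∫ u : Fin n → ℝ, Φ (η + (m : ℝ)⁻¹ • u) = (m : ℝ) ^ n • ∫ y, Φ y := by
    rw [Measure.integral_comp_inv_smul_of_nonneg volume (fun u => Φ (η + u))
      (Nat.cast_nonneg m), integral_add_left_eq_self]
    simp
  rw [h1]
  have h3 : (m : ℂ) ^ n * ∫ y, Φ y = (m : ℝ) ^ n • ∫ y, Φ y := by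
    rw [Complex.real_smul]; push_cast; rfl
  rw [h3, ← h2]
  refine integral_congr_ae (Eventually.of_forall fun u => ?_)
  simp only [hΦ, Pi.add_apply, Pi.smul_apply, smul_eq_mul, add_sub_cancel_left]
  congr 4
  refine Finset.sum_congr rfl fun i _ => ?_
  field_simp

/-! ### Convergence of the regularisations -/

lemma cpt_re_im (z : Fin n → ℂ) : cpt (fun i => (z i).re) (fun i => (z i).im) = z := by
  funext i; exact Complex.re_add_im (z i)

/-- The regularisation at `z` along the slice through `z` converges to `f`, locally uniformly: this is
stated as a limit jointly in `m → ∞` and `z → z₀`. -/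
lemma approx_tendsto {U : Set (Fin n → ℝ)} (hU : IsOpen U) {f : (Fin n → ℂ) → ℂ}
    (hf : ContinuousOn f (tube U)) {k : ℝ} {z₀ : Fin n → ℂ} (hz₀ : z₀ ∈ tube U)
    (hk : ∀ i, |(z₀ i).im| < k) :
    Tendsto (fun p : ℕ × (Fin n → ℂ) => approx f k p.1 (fun i => (p.2 i).re) p.2)
      (atTop ×ˢ 𝓝 z₀) (𝓝 (f z₀)) := by
  have hJ := gaussJ_pos n
  set x₀ : Fin n → ℝ := fun i => (z₀ i).re with hx₀
  obtain ⟨r, hr, hrU⟩ := Metric.nhds_basis_closedBall.mem_iff.1 (hU.mem_nhds hz₀)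
  obtain ⟨M, hM0, hM⟩ := exists_bound hf (isCompact_closedBall x₀ r) hrU k
  have hrec : Continuous fun z : Fin n → ℂ => fun i => (z i).re := by fun_prop
  have himc : Continuous fun z : Fin n → ℂ => fun i => (z i).im := by fun_prop
  have hre : Tendsto (fun p : ℕ × (Fin n → ℂ) => fun i => (p.2 i).re) (atTop ×ˢ 𝓝 z₀) (𝓝 x₀) :=
    (hrec.tendsto z₀).comp tendsto_snd
  have him : Tendsto (fun p : ℕ × (Fin n → ℂ) => fun i => (p.2 i).im) (atTop ×ˢ 𝓝 z₀)
      (𝓝 fun i => (z₀ i).im) :=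
    (himc.tendsto z₀).comp tendsto_snd
  have hball : ∀ᶠ p : ℕ × (Fin n → ℂ) in atTop ×ˢ 𝓝 z₀,
      (fun i => (p.2 i).re) ∈ closedBall x₀ r := hre.eventually (closedBall_mem_nhds x₀ hr)
  have hcube : cube n k ∈ 𝓝 (fun i => (z₀ i).im) := by
    have : (univ.pi fun _ : Fin n => Ioo (-k) k) ⊆ cube n k := fun y hy =>
      ⟨fun i => (hy i (mem_univ _)).1.le, fun i => (hy i (mem_univ _)).2.le⟩
    exact mem_of_superset (set_pi_mem_nhds finite_univ fun i _ =>
      Ioo_mem_nhds (abs_lt.1 (hk i)).1 (abs_lt.1 (hk i)).2) this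
  let Ψ : ℕ × (Fin n → ℂ) → (Fin n → ℝ) → ℂ := fun p u =>
    (cube n k).indicator (fun y => f (cpt (fun i => (p.2 i).re) y))
      ((fun i => (p.2 i).im) + (p.1 : ℝ)⁻¹ • u) * Real.exp (-∑ i, u i ^ 2)
  have hlim : Tendsto (fun p => ∫ u, Ψ p u) (atTop ×ˢ 𝓝 z₀)
      (𝓝 (∫ u : Fin n → ℝ, f z₀ * Real.exp (-∑ i, u i ^ 2))) := by
    refine tendsto_integral_filter_of_dominated_convergence
      (fun u => M * Real.exp (-∑ i, u i ^ 2)) ?_ ?_ (integrable_gauss.const_mul M) ?_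
    · filter_upwards [hball] with p hp
      have h1 : ContinuousOn (fun y => f (cpt (fun i => (p.2 i).re) y)) (cube n k) :=
        hf.comp (continuous_cpt' _).continuousOn fun y _ => cpt_mem (hrU hp) y
      have h2 : Measurable ((cube n k).indicator (fun y => f (cpt (fun i => (p.2 i).re) y))) := by
        classical
        rw [← piecewise_eq_indicator]
        exact h1.measurable_piecewise continuousOn_const (isCompact_cube k).measurableSet
      refine Measurable.aestronglyMeasurable (Measurable.mul (h2.comp ?_) ?_)
      · exact Continuous.measurable (by fun_prop)
      · exact Continuous.measurable (by fun_prop)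
    · filter_upwards [hball] with p hp
      refine Eventually.of_forall fun u => ?_
      simp only [Ψ]
      rw [norm_mul, Complex.norm_real, Real.norm_of_nonneg (Real.exp_pos _).le]
      refine mul_le_mul_of_nonneg_right ?_ (Real.exp_pos _).le
      rw [norm_indicator_eq_indicator_norm]
      exact indicator_le' (fun y hy => hM _ hp y hy) (fun _ _ => hM0) _
    · refine Eventually.of_forall fun u => ?_
      have hinv : Tendsto (fun p : ℕ × (Fin n → ℂ) => (p.1 : ℝ)⁻¹) (atTop ×ˢ 𝓝 z₀) (𝓝 0) :=
        (tendsto_inv_atTop_zero.comp tendsto_natCast_atTop_atTop).comp tendsto_fst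
      have harg : Tendsto (fun p : ℕ × (Fin n → ℂ) => (fun i => (p.2 i).im) + (p.1 : ℝ)⁻¹ • u)
          (atTop ×ˢ 𝓝 z₀) (𝓝 fun i => (z₀ i).im) := by
        simpa using him.add (hinv.smul_const u)
      have hpt : Tendsto (fun p : ℕ × (Fin n → ℂ) =>
          cpt (fun i => (p.2 i).re) ((fun i => (p.2 i).im) + (p.1 : ℝ)⁻¹ • u))
          (atTop ×ˢ 𝓝 z₀) (𝓝 z₀) := by
        have := (continuous_cpt.tendsto (x₀, fun i => (z₀ i).im)).comp (hre.prodMk_nhds harg)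
        simp only [hx₀, cpt_re_im] at this
        exact this
      have hfl := (hf.continuousAt ((isOpen_tube hU).mem_nhds hz₀)).tendsto.comp hpt
      refine Tendsto.mul_const _ (hfl.congr' ?_)
      filter_upwards [harg.eventually hcube] with p hp
      have hp' : ((fun i => (p.2 i).im) + (p.1 : ℝ)⁻¹ • u) ∈ cube n k := hp
      rw [indicator_of_mem hp']
      rfl
  have hconst : ∫ u : Fin n → ℝ, f z₀ * Real.exp (-∑ i, u i ^ 2) = f z₀ * gaussJ n := by
    rw [integral_const_mul, integral_complex_ofReal]; rfl
  rw [hconst] at hlim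
  have hJ' : (gaussJ n : ℂ) ≠ 0 := by exact_mod_cast hJ.ne'
  have hfin := hlim.div_const (gaussJ n : ℂ)
  rw [mul_div_cancel_right₀ _ hJ'] at hfin
  refine hfin.congr' ?_
  have hpos : ∀ᶠ p : ℕ × (Fin n → ℂ) in atTop ×ˢ 𝓝 z₀, 0 < p.1 :=
    tendsto_fst.eventually (eventually_gt_atTop 0)
  filter_upwards [hpos] with p hp
  have := gint_eq_gauss f k hp (fun i => (p.2 i).re) (fun i => (p.2 i).im)
  rw [cpt_re_im] at this
  simp only [Ψ]
  rw [← this, approx]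
  ring

lemma hasFDerivAt_sq (z w : Fin n → ℂ) (i : Fin n) :
    HasFDerivAt (fun z : Fin n → ℂ => (z i - w i) ^ 2)
      ((2 * (z i - w i)) • (ContinuousLinearMap.proj (R := ℂ) (φ := fun _ : Fin n => ℂ) i)) z := by
  have h0 : HasFDerivAt (fun z : Fin n → ℂ => z i)
      (ContinuousLinearMap.proj (R := ℂ) (φ := fun _ : Fin n => ℂ) i) z := hasFDerivAt_apply i z
  have h1 := h0.sub_const (w i)
  have h2 : HasDerivAt (fun t : ℂ => t ^ 2) (2 * (z i - w i)) (z i - w i) := by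
    simpa using hasDerivAt_pow 2 (z i - w i)
  exact h2.comp_hasFDerivAt z h1
lemma hasFDerivAt_ker (m : ℕ) (z w : Fin n → ℂ) :
    HasFDerivAt (fun z => ker m z w)
      ((ker m z w * (m : ℂ) ^ 2) • ∑ i, (2 * (z i - w i)) •
        (ContinuousLinearMap.proj (R := ℂ) (φ := fun _ : Fin n => ℂ) i)) z := by
  have h2 := (HasFDerivAt.fun_sum (u := Finset.univ)
    fun i _ => hasFDerivAt_sq z w i).const_mul ((m : ℂ) ^ 2)
  rw [mul_smul]
  exact h2.cexp

lemma differentiable_gint {f : (Fin n → ℂ) → ℂ} {k : ℝ} (m : ℕ) {b : Fin n → ℝ}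
    (hf : ContinuousOn (fun y => f (cpt b y)) (cube n k)) : Differentiable ℂ (gint f k m b) := by
  intro z₀
  let K : (Fin n → ℂ) → (Fin n → ℝ) → ((Fin n → ℂ) →L[ℂ] ℂ) := fun z y =>
    ((ker m z (cpt b y) * (m : ℂ) ^ 2) • ∑ i, (2 * (z i - cpt b y i)) •
        (ContinuousLinearMap.proj (R := ℂ) (φ := fun _ : Fin n => ℂ) i))
  have hcb := continuous_cpt' b
  have hkc : Continuous fun q : (Fin n → ℂ) × (Fin n → ℝ) => ker m q.1 (cpt b q.2) :=
    (continuous_ker m).comp (g := fun p : (Fin n → ℂ) × (Fin n → ℂ) => ker m p.1 p.2)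
      (f := fun q : (Fin n → ℂ) × (Fin n → ℝ) => (q.1, cpt b q.2))
      (continuous_fst.prodMk (hcb.comp continuous_snd))
  have hKc : Continuous fun q : (Fin n → ℂ) × (Fin n → ℝ) => K q.1 q.2 := by
    have : ∀ i, Continuous fun q : (Fin n → ℂ) × (Fin n → ℝ) => cpt b q.2 i := fun i => by
      unfold cpt; fun_prop
    have hs : ∀ i, Continuous fun q : (Fin n → ℂ) × (Fin n → ℝ) =>
        (2 * (q.1 i - cpt b q.2 i)) •
          (ContinuousLinearMap.proj (R := ℂ) (φ := fun _ : Fin n => ℂ) i) := fun i => by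
      have h' : Continuous fun q : (Fin n → ℂ) × (Fin n → ℝ) => q.1 i := by fun_prop
      have h'' : Continuous fun q : (Fin n → ℂ) × (Fin n → ℝ) => 2 * (q.1 i - cpt b q.2 i) :=
        continuous_const.mul (h'.sub (this i))
      exact h''.smul continuous_const
    have hc : Continuous fun q : (Fin n → ℂ) × (Fin n → ℝ) =>
      ker m q.1 (cpt b q.2) * (m : ℂ) ^ 2 := hkc.mul continuous_const
    exact hc.smul (continuous_finsetSum _ fun i _ => hs i)
  have hm : MeasurableSet (cube n k) := (isCompact_cube k).measurableSet
  have hcontz : ∀ z, ContinuousOn (fun y => f (cpt b y) * ker m z (cpt b y)) (cube n k) := fun z =>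
    hf.mul (hkc.comp (continuous_const.prodMk continuous_id)).continuousOn
  have hcont' : ContinuousOn (fun q : (Fin n → ℂ) × (Fin n → ℝ) => f (cpt b q.2) • K q.1 q.2)
      (closedBall z₀ 1 ×ˢ cube n k) :=
    (hf.comp continuousOn_snd fun q hq => hq.2).smul hKc.continuousOn
  obtain ⟨M, hM⟩ := ((isCompact_closedBall z₀ 1).prod (isCompact_cube k)).exists_bound_of_continuousOn
    hcont'
  refine (hasFDerivAt_integral_of_dominated_of_fderiv_le (𝕜 := ℂ)
    (μ := volume.restrict (cube n k)) (F := fun z y => f (cpt b y) * ker m z (cpt b y))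
    (F' := fun z y => f (cpt b y) • K z y) (bound := fun _ => M)
    (closedBall_mem_nhds z₀ one_pos) ?_ ?_ ?_ ?_ ?_ ?_).differentiableAt
  · exact Eventually.of_forall fun z => (hcontz z).aestronglyMeasurable hm
  · exact (hcontz z₀).integrableOn_compact (isCompact_cube k)
  · exact (hf.smul
      (hKc.comp (continuous_const.prodMk continuous_id)).continuousOn).aestronglyMeasurable hm
  · exact (ae_restrict_mem hm).mono fun y hy z hz => hM (z, y) ⟨hz, hy⟩
  · exact (integrableOn_const (isCompact_cube k).measure_lt_top.ne)
  · exact Eventually.of_forall fun y z _ => (hasFDerivAt_ker m z (cpt b y)).const_mul _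

/-- On a bounded connected base the regularisations along one fixed slice converge to `f`. -/
lemma exists_entire_seq {U : Set (Fin n → ℝ)} (hU : IsOpen U) (hUc : IsConnected U)
    {D : ℝ} (hD : ∀ x ∈ U, ‖x‖ ≤ D) {f : (Fin n → ℂ) → ℂ} (hf : DifferentiableOn ℂ f (tube U))
    {R : ℝ} (hR : 0 ≤ R) :
    ∃ F : ℕ → (Fin n → ℂ) → ℂ, (∀ m, Differentiable ℂ (F m)) ∧
      TendstoLocallyUniformlyOn F f atTop (slab U R) := by
  -- The slices extend far enough beyond height `R` for the lateral faces to be negligible.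
  set k : ℝ := R + (n * (2 * D) ^ 2 + 1) with hk
  have hN : (0:ℝ) ≤ n * (2 * D) ^ 2 := by positivity
  have hk0 : 0 ≤ k := by linarith
  have hRk : R < k := by linarith
  have hkk : n * (2 * D) ^ 2 + 1 ≤ (k - R) ^ 2 := by
    rw [hk, add_sub_cancel_left]; nlinarith
  have hshift := fun (B : Set (Fin n → ℝ)) (h1 : IsCompact B) (h2 : Convex ℝ B) (h3 : B ⊆ U)
    (ε : ℝ) (hε : 0 < ε) => approx_shift hU hf hD hk0 hRk.le hkk h1 h2 h3 hε
  have hball : ∀ x ∈ U, ∃ r > 0, closedBall x r ⊆ U := fun x hx =>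
    Metric.nhds_basis_closedBall.mem_iff.1 (hU.mem_nhds hx)
  obtain ⟨a, ha⟩ := hUc.nonempty
  have hall : ∀ x ∈ U, ∀ ε > 0, ∀ᶠ m : ℕ in atTop, ∀ z ∈ slab U R,
      ‖approx f k m a z - approx f k m x z‖ < ε := by
    intro x hx
    -- The comparison of two slices holds inside small balls and is transitive.
    refine hUc.isPreconnected.induction₂ (fun a b => ∀ ε > 0, ∀ᶠ m : ℕ in atTop, ∀ z ∈ slab U R,
      ‖approx f k m a z - approx f k m b z‖ < ε) ?_ ?_ ?_ ha hx
    · intro b hb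
      obtain ⟨r, hr, hrU⟩ := hball b hb
      filter_upwards [mem_nhdsWithin_of_mem_nhds (closedBall_mem_nhds b hr)] with c hc ε hε
      filter_upwards [hshift _ (isCompact_closedBall b r) (convex_closedBall b r) hrU ε hε]
        with m hm z hz
      exact hm c hc b (mem_closedBall_self hr.le) z hz
    · intro b c d _ _ _ h1 h2 ε hε
      filter_upwards [h1 (ε / 2) (half_pos hε), h2 (ε / 2) (half_pos hε)] with m e1 e2 z hz
      have := norm_sub_le_norm_sub_add_norm_sub (approx f k m b z) (approx f k m c z)
        (approx f k m d z)
      linarith [e1 z hz, e2 z hz]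
    · intro b c _ _ h ε hε
      filter_upwards [h ε hε] with m e z hz
      rw [norm_sub_rev]
      exact e z hz
  refine ⟨fun m => approx f k m a, fun m => ?_, ?_⟩
  · exact (differentiable_gint m (hf.continuousOn.comp (continuous_cpt' a).continuousOn
      fun y _ => cpt_mem ha y)).const_mul _
  rw [Metric.tendstoLocallyUniformlyOn_iff]
  intro ε hε z₀ hz₀
  obtain ⟨r, hr, hrU⟩ := hball _ hz₀.1
  have h1 := hall _ hz₀.1 (ε / 4) (by positivity)
  have h2 := hshift _ (isCompact_closedBall _ r) (convex_closedBall _ r) hrU (ε / 4)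
    (by positivity)
  have h3 := (approx_tendsto hU hf.continuousOn (k := k) (z₀ := z₀) hz₀.1
    (fun i => (hz₀.2 i).trans_lt hRk)).eventually (ball_mem_nhds _ (show 0 < ε / 4 by positivity))
  obtain ⟨p, hp, q, hq, hpq⟩ := Filter.eventually_prod_iff.1 h3
  have hrec : Continuous fun z : Fin n → ℂ => fun i => (z i).re := by fun_prop
  have hfc := (hf.continuousOn.continuousAt ((isOpen_tube hU).mem_nhds hz₀.1)).eventually
    (ball_mem_nhds _ (show 0 < ε / 4 by positivity))
  have hset := hq.and ((hrec.continuousAt.eventually (closedBall_mem_nhds _ hr)).and hfc)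
  refine ⟨_, inter_mem_nhdsWithin _ hset, ?_⟩
  filter_upwards [h1, h2, hp] with m e1 e2 e3 z hz
  obtain ⟨hzs, hzq, hzr, hzf⟩ := hz
  have d1 := e1 z hzs
  have d2 := e2 _ hzr _ (mem_closedBall_self hr.le) z hzs
  have d3 := hpq e3 hzq
  replace d3 : dist _ _ < ε / 4 := d3
  replace hzf : dist _ _ < ε / 4 := hzf
  rw [dist_eq_norm] at d3 hzf
  rw [dist_eq_norm]
  set A := approx f k m a z
  set A' := approx f k m (fun i => (z₀ i).re) z
  set A'' := approx f k m (fun i => (z i).re) z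
  have : f z - A = (f z - f z₀) + -(A'' - f z₀) + -(A' - A'') + -(A - A') := by ring
  rw [this]
  have t1 := norm_add_le ((f z - f z₀) + -(A'' - f z₀) + -(A' - A'')) (-(A - A'))
  have t2 := norm_add_le ((f z - f z₀) + -(A'' - f z₀)) (-(A' - A''))
  have t3 := norm_add_le (f z - f z₀) (-(A'' - f z₀))
  rw [norm_neg] at t1 t2 t3
  linarith

/-! ### Approximation on compact sets and the extension -/

/-- A compact part `L` of a connected open set lies in a bounded connected open subset: the components of
one point in `U ∩ ball a d` increase to `U`, because each point is joined to `a` by a compact path. -/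
lemma exists_bounded_connected {U : Set (Fin n → ℝ)} (hU : IsOpen U) (hUc : IsConnected U)
    {L : Set (Fin n → ℝ)} (hL : IsCompact L) (hLU : L ⊆ U) :
    ∃ V ⊆ U, IsOpen V ∧ IsConnected V ∧ L ⊆ V ∧ ∃ D : ℝ, ∀ x ∈ V, ‖x‖ ≤ D := by
  obtain ⟨a, ha⟩ := hUc.nonempty
  let V : ℕ → Set (Fin n → ℝ) := fun d => connectedComponentIn (U ∩ ball a (d + 1)) a
  have hmem : ∀ d : ℕ, a ∈ U ∩ ball a ((d : ℝ) + 1) := fun d =>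
    ⟨ha, mem_ball_self (Nat.cast_add_one_pos d)⟩
  have hVU : ∀ d, V d ⊆ U ∩ ball a (d + 1) := fun d => connectedComponentIn_subset _ _
  have hVo : ∀ d, IsOpen (V d) := fun d => (hU.inter isOpen_ball).connectedComponentIn
  have hmono : Monotone V := fun d e hde =>
    connectedComponentIn_mono a (inter_subset_inter_right _ (ball_subset_ball (by
      have : (d : ℝ) ≤ e := by exact_mod_cast hde
      linarith)))
  have hcover : L ⊆ ⋃ d, V d := by
    intro x hx
    have hJ := (hU.isConnected_iff_isPathConnected.1 hUc).joinedIn a ha x (hLU hx)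
    have hc := isCompact_range hJ.somePath.continuous
    obtain ⟨r, hr⟩ := (hc.isBounded.subset_ball a)
    obtain ⟨d, hd⟩ := exists_nat_ge r
    refine mem_iUnion.2 ⟨d, ?_⟩
    refine (isPreconnected_range hJ.somePath.continuous).subset_connectedComponentIn
      ⟨0, hJ.somePath.source⟩ ?_ ⟨1, hJ.somePath.target⟩
    refine subset_inter ?_ (hr.trans (ball_subset_ball (by linarith)))
    rintro _ ⟨t, rfl⟩
    exact hJ.somePath_mem t
  obtain ⟨d, hd⟩ := hL.elim_directed_cover V hVo hcover (hmono.directed_le)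
  refine ⟨V d, (hVU d).trans inter_subset_left, hVo d,
    isConnected_connectedComponentIn_iff.2 (hmem d), hd, ‖a‖ + (d + 1), fun x hx => ?_⟩
  have h1 := mem_ball_iff_norm.1 (hVU d hx).2
  have h2 := norm_le_norm_add_norm_sub' x a
  linarith

/-- Runge-type theorem: on compact subsets of a tube over a connected open base, holomorphic
functions are uniform limits of entire functions. -/
lemma exists_entire_approx {U : Set (Fin n → ℝ)} (hU : IsOpen U) (hUc : IsConnected U)
    {f : (Fin n → ℂ) → ℂ} (hf : DifferentiableOn ℂ f (tube U)) {K : Set (Fin n → ℂ)}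
    (hK : IsCompact K) (hKU : K ⊆ tube U) {ε : ℝ} (hε : 0 < ε) :
    ∃ F : (Fin n → ℂ) → ℂ, Differentiable ℂ F ∧ ∀ z ∈ K, dist (f z) (F z) < ε := by
  have hrec : Continuous fun z : Fin n → ℂ => fun i => (z i).re := by fun_prop
  obtain ⟨V, hVU, hVo, hVc, hKV, D, hD⟩ := exists_bounded_connected hU hUc (hK.image hrec)
    (image_subset_iff.2 hKU)
  obtain ⟨R, hR, hKR⟩ := hK.isBounded.exists_pos_norm_le
  obtain ⟨F, hF, hFf⟩ := exists_entire_seq hVo hVc hD (hf.mono fun z hz => hVU hz) hR.le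
  have hsub : K ⊆ slab V R := fun z hz => ⟨hKV ⟨z, hz, rfl⟩, fun i =>
    (Complex.abs_im_le_norm _).trans ((norm_le_pi_norm z i).trans (hKR z hz))⟩
  have hu := (tendstoLocallyUniformlyOn_iff_tendstoUniformlyOn_of_compact hK).1 (hFf.mono hsub)
  obtain ⟨m, hm⟩ := (Metric.tendstoUniformlyOn_iff.1 hu ε hε).exists
  exact ⟨F m, hF m, hm⟩

lemma isCompact_slab {B : Set (Fin n → ℝ)} (hB : IsCompact B) (R : ℝ) :
    IsCompact (slab B R) := by
  refine ((hB.prod (isCompact_cube R)).image continuous_cpt).of_isClosed_subset ?_ ?_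
  · have hrec : Continuous fun z : Fin n → ℂ => fun i => (z i).re := by fun_prop
    have : slab B R = (fun z : Fin n → ℂ => fun i => (z i).re) ⁻¹' B ∩
        ⋂ i, {z | |(z i).im| ≤ R} := by
      ext z; simp [slab]
    rw [this]
    refine (hB.isClosed.preimage hrec).inter (isClosed_iInter fun i => ?_)
    exact isClosed_le (by fun_prop) continuous_const
  · intro z hz
    exact ⟨(fun i => (z i).re, fun i => (z i).im), ⟨hz.1, fun i => (abs_le.1 (hz.2 i)).1,
      fun i => (abs_le.1 (hz.2 i)).2⟩, cpt_re_im z⟩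

/-- One sequence of entire functions converging to `f` uniformly on all compact subsets of the
tube. -/
lemma exists_entire_seq_compact {U : Set (Fin n → ℝ)} (hU : IsOpen U) (hUc : IsConnected U)
    {f : (Fin n → ℂ) → ℂ} (hf : DifferentiableOn ℂ f (tube U)) :
    ∃ F : ℕ → (Fin n → ℂ) → ℂ, (∀ k, Differentiable ℂ (F k)) ∧
      ∀ K ⊆ tube U, IsCompact K → TendstoUniformlyOn F f atTop K := by
  have hTo := isOpen_tube hU
  have : LocallyCompactSpace (tube U) := hTo.locallyCompactSpace
  let E : CompactExhaustion (tube U) := CompactExhaustion.choice _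
  have hE : ∀ k : ℕ, ∃ F : (Fin n → ℂ) → ℂ, Differentiable ℂ F ∧
      ∀ z ∈ ((↑) : tube U → Fin n → ℂ) '' E k, dist (f z) (F z) < 1 / ((k : ℝ) + 1) := fun k =>
    exists_entire_approx hU hUc hf ((E.isCompact k).image continuous_subtype_val)
      (by rintro _ ⟨z, _, rfl⟩; exact z.2) Nat.one_div_pos_of_nat
  choose F hF hFf using hE
  refine ⟨F, hF, fun K hKU hK => ?_⟩
  have hK' : IsCompact (((↑) : tube U → Fin n → ℂ) ⁻¹' K) := by
    rw [Subtype.isCompact_iff, Subtype.image_preimage_coe, inter_eq_right.2 hKU]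
    exact hK
  obtain ⟨N, hN⟩ := E.exists_superset_of_isCompact hK'
  rw [Metric.tendstoUniformlyOn_iff]
  intro ε hε
  filter_upwards [eventually_ge_atTop N,
    (tendsto_one_div_add_atTop_nhds_zero_nat (𝕜 := ℝ)).eventually_lt_const hε] with k hk hkε z hz
  exact (hFf k z ⟨⟨z, hKU hz⟩, E.subset hk (hN hz), rfl⟩).trans hkε

/-- Bochner's theorem in terms of `tube`. -/
theorem bochner {U : Set (Fin n → ℝ)} (hU : IsOpen U) (hUc : IsConnected U)
    {f : (Fin n → ℂ) → ℂ} (hf : DifferentiableOn ℂ f (tube U)) :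
    ∃ g : (Fin n → ℂ) → ℂ, DifferentiableOn ℂ g (tube (convexHull ℝ U)) ∧
      EqOn f g (tube U) := by
  obtain ⟨F, hF, hFf⟩ := exists_entire_seq_compact hU hUc hf
  have hgood : U ⊆ goodSet F := by
    intro x hx
    obtain ⟨r, hr, hrU⟩ := Metric.nhds_basis_closedBall.mem_iff.1 (hU.mem_nhds hx)
    refine ⟨r, hr, fun R => ?_⟩
    refine ((hFf _ (fun z hz => hrU hz.1)
      (isCompact_slab (isCompact_closedBall x r) R)).mono ?_).uniformCauchySeqOn
    exact fun z hz => ⟨ball_subset_closedBall hz.1, hz.2⟩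
  obtain ⟨g, hg, hlim⟩ := exists_limit_on_hull hF hUc hgood
  refine ⟨g, hg, fun z hz => ?_⟩
  have h1 := (hFf {z} (singleton_subset_iff.2 hz) isCompact_singleton).tendsto_at
    (mem_singleton z)
  exact tendsto_nhds_unique h1 (hlim z (subset_convexHull ℝ U hz))

end Tube

/-- Bochner's tube theorem. A function holomorphic on the tube
`T(U) = {z : Re(z) ∈ U}` over a connected open `U ⊆ ℝⁿ` extends holomorphically
to the tube over the convex hull of `U`. -/
theorem stmt11 (n : ℕ) (U : Set (Fin n → ℝ)) (hUopen : IsOpen U) (hUconn : IsConnected U)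
    (f : (Fin n → ℂ) → ℂ)
    (hf : DifferentiableOn ℂ f {z : Fin n → ℂ | (fun i => (z i).re) ∈ U}) :
    ∃ g : (Fin n → ℂ) → ℂ,
      DifferentiableOn ℂ g {z : Fin n → ℂ | (fun i => (z i).re) ∈ convexHull ℝ U} ∧
      Set.EqOn f g {z : Fin n → ℂ | (fun i => (z i).re) ∈ U} := by
  exact Tube.bochner hUopen hUconn hf
end

section
/- Let T ⊂ ℂ^n be a tube domain (T = U + iℝ^n for U ⊂ ℝ^n open and connected), let g, h : T → ℂ be holomorphic with h nonvanishing on T and |g(z)| ≤ |h(z)| for all z ∈ T. If g̃, h̃ are holomorphic continuations of g, h to the convex hull T̂ of T, then |g̃(z)| ≤ |h̃(z)| for all z ∈ T̂. -/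
/-!
Fix `c` with `‖c‖ < 1`. The function `ht - c * gt` is holomorphic on the convex tube and has no zero
on the original tube. If `‖ht z‖ < ‖gt z‖` at some point `z` of the convex tube, then this function
with `c = ht z / gt z` vanishes at `z`. So the theorem reduces to a statement
about zeros (`ne_zero_on_convexHull`): a function `H` holomorphic on the tube over `convexHull ℝ U`
and without zeros over the open connected set `U` has no zeros at all. The full tube theorem is not
needed, because `H` is already defined over the convex hull.

The key step (`ne_zero_triangle`) is a continuity principle. If `H` has no zeros over two segments
`[b, b + u]` and `[b, b + v]`, it has none over the part `b + s u + r v`, `s, r ≥ 0`, `s + r < 1`, of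
the triangle they span. To see this, consider the analytic curves
`ζ ↦ b + (tζ - εζ(1-ζ)) u + (t(1-ζ) - εζ(1-ζ)) v + iy`. The parameters `ζ` in the strip
`0 ≤ re ζ ≤ 1` at which both coefficients have nonnegative real part form a compact set, because
`re ζ(1-ζ)` grows like `(im ζ)²`, and its boundary is mapped over the two segments. At `t = 0` only
boundary points remain. By Hurwitz's argument (`exists_zero_left`) zeros cannot appear in the
interior at a first time `t`.

Finally, the component containing `U` of the interior of the set over which `H` has no zeros is
convex: by the triangle step "the segment between two points lies in it" is a transitive relation,
and a connectedness argument applies.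
-/

open Set Filter Topology

/-! ### Persistence of zeros in a family of holomorphic functions -/

/-- Hurwitz's argument: a zero of a continuous family of holomorphic functions is either not
isolated in its slice or persists at some earlier parameter. -/
lemma exists_zero_left (G : ℝ × ℂ → ℂ) (O : Set (ℝ × ℂ)) (hO : IsOpen O)
    (hc : ContinuousOn G O)
    (hd : ∀ t ζ, (t, ζ) ∈ O → DifferentiableAt ℂ (fun w => G (t, w)) ζ)
    (t₀ : ℝ) (ζ₀ : ℂ) (hp : (t₀, ζ₀) ∈ O) (hz : G (t₀, ζ₀) = 0) :
    (∀ᶠ ζ in 𝓝 ζ₀, G (t₀, ζ) = 0) ∨ ∃ t < t₀, ∃ ζ, (t, ζ) ∈ O ∧ G (t, ζ) = 0 := by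
  have hOn : ∀ᶠ ζ in 𝓝 ζ₀, (t₀, ζ) ∈ O :=
    (Continuous.prodMk_right t₀).continuousAt.eventually (hO.mem_nhds hp)
  have han : AnalyticAt ℂ (fun w => G (t₀, w)) ζ₀ :=
    Complex.analyticAt_iff_eventually_differentiableAt.2 (hOn.mono fun ζ h => hd _ _ h)
  rcases han.eventually_eq_zero_or_eventually_ne_zero with h | h
  · exact Or.inl h
  right
  by_contra! hcon
  obtain ⟨ρ, hρ, hρs⟩ := Metric.nhds_basis_closedBall.mem_iff.1
    (hOn.and (eventually_nhdsWithin_iff.1 h))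
  have hball : ∀ᶠ t in 𝓝 t₀, ∀ ζ ∈ Metric.closedBall ζ₀ ρ, (t, ζ) ∈ O := by
    refine (isCompact_closedBall ζ₀ ρ).eventually_forall_of_forall_eventually fun ζ hζ => ?_
    exact hO.mem_nhds (hρs hζ).1
  have hsph : ∀ᶠ t in 𝓝 t₀, ∀ ζ ∈ Metric.sphere ζ₀ ρ, ‖G (t, ζ₀)‖ < ‖G (t, ζ)‖ := by
    refine (isCompact_sphere ζ₀ ρ).eventually_forall_of_forall_eventually fun ζ hζ => ?_
    have hζ' := hρs (Metric.sphere_subset_closedBall hζ)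
    have c1 : ContinuousAt (fun q : ℝ × ℂ => ‖G (q.1, ζ₀)‖) (t₀, ζ) := by
      refine ContinuousAt.norm ?_
      have : ContinuousAt G ((fun q : ℝ × ℂ => (q.1, ζ₀)) (t₀, ζ)) :=
        hc.continuousAt (hO.mem_nhds hp)
      exact ContinuousAt.comp (f := fun q : ℝ × ℂ => (q.1, ζ₀)) this (by fun_prop)
    have c2 : ContinuousAt (fun q : ℝ × ℂ => ‖G q‖) (t₀, ζ) :=
      (hc.continuousAt (hO.mem_nhds hζ'.1)).norm
    refine c1.eventually_lt c2 ?_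
    have hne : ζ ≠ ζ₀ := by
      rintro rfl
      simp at hζ
      exact hρ.ne hζ
    simpa [hz] using hζ'.2 hne
  obtain ⟨t, ⟨ht1, ht2⟩, htlt⟩ :=
    (((hball.and hsph).filter_mono nhdsWithin_le_nhds).and
      (self_mem_nhdsWithin : Iio t₀ ∈ 𝓝[<] t₀)).exists
  have hne : ∀ ζ ∈ Metric.closedBall ζ₀ ρ, G (t, ζ) ≠ 0 := fun ζ hζ => hcon t htlt ζ (ht1 ζ hζ)
  have hdc : DiffContOnCl ℂ (fun ζ => (G (t, ζ))⁻¹) (Metric.ball ζ₀ ρ) := by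
    apply DifferentiableOn.diffContOnCl
    rw [closure_ball _ hρ.ne']
    exact fun ζ hζ => ((hd _ _ (ht1 ζ hζ)).inv (hne ζ hζ)).differentiableWithinAt
  obtain ⟨w, hw, hmax⟩ := Complex.exists_mem_frontier_isMaxOn_norm Metric.isBounded_ball
    ⟨ζ₀, Metric.mem_ball_self hρ⟩ hdc
  rw [frontier_ball _ hρ.ne'] at hw
  have h1 := hmax (subset_closure (Metric.mem_ball_self hρ))
  simp only [Function.comp_apply, norm_inv, mem_ofPred_eq] at h1
  have h0 : 0 < ‖G (t, ζ₀)‖ := norm_pos_iff.2 (hne _ (Metric.mem_closedBall_self hρ.le))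
  have h2 := inv_strictAnti₀ h0 (ht2 w hw)
  linarith

/-! ### Zeros over a triangle -/

/-- The tube over a set of real parts. -/
def tubeOver {n : ℕ} (U : Set (Fin n → ℝ)) : Set (Fin n → ℂ) := {z | (fun i => (z i).re) ∈ U}

lemma isOpen_tubeOver {n : ℕ} {U : Set (Fin n → ℝ)} (hU : IsOpen U) : IsOpen (tubeOver U) :=
  hU.preimage (by fun_prop)

lemma Convex.triangle_mem {E : Type*} [AddCommGroup E] [Module ℝ E] {C : Set E} (hC : Convex ℝ C)
    {b u v : E} (h0 : b ∈ C) (h1 : b + u ∈ C) (h2 : b + v ∈ C) {α β : ℝ} (hα : 0 ≤ α) (hβ : 0 ≤ β)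
    (hαβ : α + β ≤ 1) : b + α • u + β • v ∈ C := by
  have := hC.sum_mem (t := Finset.univ) (w := ![1 - α - β, α, β]) (z := ![b, b + u, b + v])
    (by
      intro i _
      fin_cases i
      · change 0 ≤ 1 - α - β
        linarith
      exacts [hα, hβ])
    (by simp [Fin.sum_univ_three]; ring)
    (by intro i _; fin_cases i; exacts [h0, h1, h2])
  convert this using 1
  simp [Fin.sum_univ_three]
  module

/-- Continuity principle for a pair of segments with a common end point. -/
lemma ne_zero_triangle {n : ℕ} {U' V : Set (Fin n → ℝ)} (hU' : IsOpen U') (hconv : Convex ℝ U')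
    {H : (Fin n → ℂ) → ℂ} (hH : DifferentiableOn ℂ H (tubeOver U')) (hVU : V ⊆ U')
    (hV : ∀ z ∈ tubeOver V, H z ≠ 0) (b u v : Fin n → ℝ)
    (hu : ∀ s ∈ Icc (0 : ℝ) 1, b + s • u ∈ V) (hv : ∀ s ∈ Icc (0 : ℝ) 1, b + s • v ∈ V)
    {s r : ℝ} (hs : 0 ≤ s) (hr : 0 ≤ r) (hsr : s + r < 1) (z : Fin n → ℂ)
    (hz : (fun i => (z i).re) = b + s • u + r • v) : H z ≠ 0 := by
  -- At `t = 1`, `ζ = x` the coefficients of `u` and `v` are `s` and `r`.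
  obtain ⟨x, hx⟩ : ∃ x, x = (1 + s - r) / 2 := ⟨_, rfl⟩
  have hx0 : 0 < x := by linarith
  have hx1 : x < 1 := by linarith
  have hxx : 0 < x * (1 - x) := mul_pos hx0 (by linarith)
  obtain ⟨ε, hεd⟩ : ∃ ε, ε = (1 - s - r) / (2 * (x * (1 - x))) := ⟨_, rfl⟩
  have hε : 0 < ε := by rw [hεd]; apply div_pos <;> linarith
  have hεx : ε * (x * (1 - x)) = (1 - s - r) / 2 := by rw [hεd]; field_simp [hxx.ne', hx0.ne', (sub_pos.2 hx1).ne']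
  clear hεd
  let A : ℝ × ℂ → ℂ := fun p => p.1 * p.2 - ε * (p.2 * (1 - p.2))
  let B : ℝ × ℂ → ℂ := fun p => p.1 * (1 - p.2) - ε * (p.2 * (1 - p.2))
  let P : ℝ × ℂ → (Fin n → ℂ) := fun p i => b i + A p * u i + B p * v i + Complex.I * (z i).im
  have hAre : ∀ p : ℝ × ℂ, (A p).re = p.1 * p.2.re - ε * (p.2.re * (1 - p.2.re) + p.2.im ^ 2) := by
    intro p; simp [A, -mul_eq_mul_left_iff]; ring
  have hBre : ∀ p : ℝ × ℂ,
      (B p).re = p.1 * (1 - p.2.re) - ε * (p.2.re * (1 - p.2.re) + p.2.im ^ 2) := by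
    intro p; simp [B, -mul_eq_mul_left_iff]; ring
  have hAc : Continuous A := by fun_prop
  have hBc : Continuous B := by fun_prop
  have hPc : Continuous P := by fun_prop
  have hPre : ∀ p, (fun i => (P p i).re) = b + (A p).re • u + (B p).re • v := by
    intro p; ext i; simp [P]
  have hPd : ∀ t ζ, DifferentiableAt ℂ (fun w => P (t, w)) ζ := by
    intro t ζ
    rw [differentiableAt_pi]
    intro i
    simp only [P, A, B]
    fun_prop
  have hTo := isOpen_tubeOver hU'
  let G : ℝ × ℂ → ℂ := fun p => H (P p)
  let K : Set (ℝ × ℂ) :=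
    {p | 0 ≤ p.1 ∧ p.1 ≤ 1 ∧ 0 ≤ p.2.re ∧ p.2.re ≤ 1 ∧ 0 ≤ (A p).re ∧ 0 ≤ (B p).re}
  let O : Set (ℝ × ℂ) :=
    {p | 0 < p.2.re ∧ p.2.re < 1 ∧ 0 < (A p).re ∧ 0 < (B p).re ∧ P p ∈ tubeOver U'}
  have hsum : ∀ p ∈ K, (A p).re + (B p).re ≤ p.1 := by
    rintro p ⟨h1, h2, h3, h4, h5, h6⟩
    have : 0 ≤ ε * (p.2.re * (1 - p.2.re) + p.2.im ^ 2) :=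
      mul_nonneg hε.le (add_nonneg (mul_nonneg h3 (by linarith)) (sq_nonneg _))
    rw [hAre, hBre]; nlinarith
  have hKU : ∀ p ∈ K, P p ∈ tubeOver U' := by
    intro p hp
    have h1 := hsum p hp
    obtain ⟨-, h2, -, -, h5, h6⟩ := hp
    have e0 : b ∈ U' := by simpa using hVU (hu 0 (by simp))
    have e1 : b + u ∈ U' := by simpa using hVU (hu 1 (by simp))
    have e2 : b + v ∈ U' := by simpa using hVU (hv 1 (by simp))
    change (fun i => (P p i).re) ∈ U'
    rw [hPre]
    exact hconv.triangle_mem e0 e1 e2 h5 h6 (by linarith)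
  have hKO : ∀ p ∈ K, G p = 0 → p ∈ O := by
    intro p hp hG
    have hle := hsum p hp
    have hU := hKU p hp
    obtain ⟨h1, h2, h3, h4, h5, h6⟩ := hp
    have hA : 0 < (A p).re := by
      refine h5.lt_of_ne fun h => hV (P p) ?_ hG
      change (fun i => (P p i).re) ∈ V
      rw [hPre, ← h]
      simpa using hv (B p).re ⟨h6, by linarith⟩
    have hB : 0 < (B p).re := by
      refine h6.lt_of_ne fun h => hV (P p) ?_ hG
      change (fun i => (P p i).re) ∈ V
      rw [hPre, ← h]
      simpa using hu (A p).re ⟨h5, by linarith⟩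
    have hsq : 0 ≤ ε * p.2.im ^ 2 := by positivity
    refine ⟨h3.lt_of_ne fun h => ?_, h4.lt_of_ne fun h => ?_, hA, hB, hU⟩
    · rw [hAre, ← h] at hA; linarith
    · rw [hBre, h] at hB; linarith
  have hOK : ∀ p ∈ O, p.1 ≤ 1 → p ∈ K := by
    rintro p ⟨h1, h2, h3, h4, -⟩ hp
    refine ⟨?_, hp, h1.le, h2.le, h3.le, h4.le⟩
    have : 0 ≤ ε * (p.2.re * (1 - p.2.re) + p.2.im ^ 2) :=
      mul_nonneg hε.le (add_nonneg (mul_nonneg h1.le (by linarith)) (sq_nonneg _))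
    rw [hAre] at h3; rw [hBre] at h4; nlinarith
  have hOo : IsOpen O := by
    refine IsOpen.and (isOpen_lt (by fun_prop) (by fun_prop)) <|
      IsOpen.and (isOpen_lt (by fun_prop) (by fun_prop)) <|
      IsOpen.and (isOpen_lt (by fun_prop) (by fun_prop)) <|
      IsOpen.and (isOpen_lt (by fun_prop) (by fun_prop)) (hTo.preimage hPc)
  have hKcl : IsClosed K := by
    refine IsClosed.and (isClosed_le (by fun_prop) (by fun_prop)) <|
      IsClosed.and (isClosed_le (by fun_prop) (by fun_prop)) <|
      IsClosed.and (isClosed_le (by fun_prop) (by fun_prop)) <|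
      IsClosed.and (isClosed_le (by fun_prop) (by fun_prop)) <|
      IsClosed.and (isClosed_le (by fun_prop) (by fun_prop)) (isClosed_le (by fun_prop) (by fun_prop))
  have hKc : IsCompact K := by
    refine IsCompact.of_isClosed_subset
      ((isCompact_Icc (a := (0 : ℝ)) (b := 1)).prod
        (isCompact_closedBall (0 : ℂ) (1 + (1 + 1 / ε)))) hKcl ?_
    rintro p ⟨h1, h2, h3, h4, h5, h6⟩
    refine ⟨⟨h1, h2⟩, ?_⟩
    rw [mem_closedBall_zero_iff]
    refine (Complex.norm_le_abs_re_add_abs_im _).trans (add_le_add (abs_le.2 ⟨by linarith, h4⟩) ?_)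
    -- `0 ≤ re A` bounds `ε (im ζ)²` by `1`.
    have hy : p.2.im ^ 2 ≤ 1 / ε := by
      rw [le_div_iff₀ hε]
      rw [hAre] at h5
      have : 0 ≤ ε * (p.2.re * (1 - p.2.re)) :=
        mul_nonneg hε.le (mul_nonneg h3 (by linarith))
      nlinarith
    have : 0 < 1 / ε := by positivity
    exact abs_le_of_sq_le_sq (by nlinarith) (by linarith)
  have hHc : ContinuousOn H (tubeOver U') := hH.continuousOn
  have hZc : IsCompact (K ∩ G ⁻¹' {0}) :=
    hKc.of_isClosed_subset ((hHc.comp hPc.continuousOn hKU).preimage_isClosed_of_isClosed hKcl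
      isClosed_singleton) inter_subset_left
  intro hzero
  have hin : ((1 : ℝ), (x : ℂ)) ∈ K ∩ G ⁻¹' {0} := by
    have eA : A (1, (x : ℂ)) = (s : ℂ) := by
      have : x - ε * (x * (1 - x)) = s := by rw [hεx, hx]; ring
      simp only [A]; rw [← this]; push_cast; ring
    have eB : B (1, (x : ℂ)) = (r : ℂ) := by
      have : (1 - x) - ε * (x * (1 - x)) = r := by rw [hεx, hx]; ring
      simp only [B]; rw [← this]; push_cast; ring
    refine ⟨⟨zero_le_one, le_rfl, by simpa using hx0.le, by simpa using hx1.le, ?_, ?_⟩, ?_⟩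
    · rw [eA]; simpa using hs
    · rw [eB]; simpa using hr
    · have : P (1, (x : ℂ)) = z := by
        ext i
        have hi := congrFun hz i
        simp only [P, eA, eB]
        apply Complex.ext <;> simp [hi]
      simp [G, this, hzero]
  obtain ⟨p₁, hp₁, hmin⟩ := hZc.exists_isMinOn ⟨_, hin⟩ continuous_fst.continuousOn
  have hZ1 : IsCompact ((K ∩ G ⁻¹' {0}) ∩ {p | p.1 = p₁.1}) :=
    hZc.inter_right (isClosed_eq continuous_fst continuous_const)
  -- Among the zeros with minimal `t`, take one with maximal imaginary part: all of these
  -- zeros are interior to `K`, so the slice `G (t₀, ·)` cannot vanish identically near it.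
  obtain ⟨⟨t₀, ζ₀⟩, ⟨hp₀, ht₀⟩, hmax⟩ := hZ1.exists_isMaxOn ⟨p₁, hp₁, rfl⟩
    (f := fun p : ℝ × ℂ => p.2.im) (by fun_prop)
  have hpO := hKO _ hp₀.1 hp₀.2
  have ht1 : t₀ ≤ 1 := hp₀.1.2.1
  simp only [mem_ofPred_eq] at ht₀
  rcases exists_zero_left G O hOo (hHc.comp hPc.continuousOn fun p hp => hp.2.2.2.2)
    (fun t ζ h => ((hH.differentiableAt (hTo.mem_nhds h.2.2.2.2)).comp ζ (hPd t ζ)))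
    t₀ ζ₀ hpO hp₀.2 with h | ⟨t, ht, ζ, hO1, hG1⟩
  · have hOn : ∀ᶠ ζ in 𝓝 ζ₀, (t₀, ζ) ∈ O :=
      (Continuous.prodMk_right t₀).continuousAt.eventually (hOo.mem_nhds hpO)
    have hcurve : Tendsto (fun η : ℝ => ζ₀ + η * Complex.I) (𝓝[>] 0) (𝓝 ζ₀) := by
      have : Continuous (fun η : ℝ => ζ₀ + η * Complex.I) := by fun_prop
      simpa using (this.tendsto 0).mono_left nhdsWithin_le_nhds
    obtain ⟨η, ⟨h1, h2⟩, hη⟩ := ((hcurve.eventually (h.and hOn)).and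
      (self_mem_nhdsWithin : Ioi (0 : ℝ) ∈ 𝓝[>] 0)).exists
    have h3 := hmax (a := (t₀, ζ₀ + η * Complex.I)) ⟨⟨hOK _ h2 ht1, h1⟩, ht₀⟩
    simp at h3
    exact absurd hη (not_lt.2 h3)
  · have h3 := hmin (a := (t, ζ)) ⟨hOK _ hO1 (by simp; linarith), hG1⟩
    simp at h3
    linarith

/-! ### Passage to the convex hull -/

/-- If a function holomorphic on a convex tube has a zero, then it has one over every open connected
set whose convex hull is the base of the tube. -/
lemma ne_zero_on_convexHull {n : ℕ} {U : Set (Fin n → ℝ)} (hU : IsOpen U) (hUc : IsConnected U)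
    {H : (Fin n → ℂ) → ℂ} (hH : DifferentiableOn ℂ H (tubeOver (convexHull ℝ U)))
    (hne : ∀ z ∈ tubeOver U, H z ≠ 0) : ∀ z ∈ tubeOver (convexHull ℝ U), H z ≠ 0 := by
  obtain ⟨x₀, hx₀⟩ := hUc.nonempty
  let W : Set (Fin n → ℝ) :=
    {x | x ∈ convexHull ℝ U ∧ ∀ z : Fin n → ℂ, (fun i => (z i).re) = x → H z ≠ 0}
  let V := connectedComponentIn (interior W) x₀
  have hUW : U ⊆ interior W := interior_maximal
    (fun x hx => ⟨subset_convexHull ℝ U hx, fun z hz => hne z (by simpa [tubeOver, hz] using hx)⟩) hU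
  have hUV : U ⊆ V := hUc.isPreconnected.subset_connectedComponentIn hx₀ hUW
  have hVW : V ⊆ interior W := connectedComponentIn_subset _ _
  have hVo : IsOpen V := isOpen_interior.connectedComponentIn
  have hVc : IsPreconnected V := isPreconnected_connectedComponentIn
  have htrans : ∀ a b c, segment ℝ a b ⊆ V → segment ℝ b c ⊆ V → segment ℝ a c ⊆ V := by
    intro a b c hab hbc
    have hcomp : ∀ p q : Fin n → ℝ, IsCompact (segment ℝ p q) := fun p q => by
      rw [segment_eq_image_lineMap]
      exact isCompact_Icc.image AffineMap.lineMap_continuous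
    obtain ⟨δ, hδ, hδV⟩ := ((hcomp a b).union (hcomp b c)).exists_thickening_subset_open hVo
      (union_subset hab hbc)
    have haV : a ∈ V := hab (left_mem_segment _ _ _)
    have hcc : connectedComponentIn (interior W) a = V :=
      (connectedComponentIn_eq haV).symm
    rw [← hcc]
    refine (convex_segment a c).isPreconnected.subset_connectedComponentIn
      (left_mem_segment _ _ _) ?_
    rintro p ⟨s, r, hs, hr, hsr, rfl⟩
    have hball : Metric.ball (s • a + r • c) (δ / 2) ⊆ W := by
      intro q hq
      -- Shrink the triangle slightly towards `p` and translate it, so that `q` is inside.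
      obtain ⟨τ, hτ0, hτ1, hτ⟩ : ∃ τ : ℝ, 0 < τ ∧ τ ≤ 1 ∧ τ * ‖s • a + r • c - b‖ < δ / 2 := by
        have hN := norm_nonneg (s • a + r • c - b)
        refine ⟨min 1 (δ / 2 / (‖s • a + r • c - b‖ + 1)), by positivity, min_le_left _ _, ?_⟩
        calc _ ≤ δ / 2 / (‖s • a + r • c - b‖ + 1) * ‖s • a + r • c - b‖ :=
              mul_le_mul_of_nonneg_right (min_le_right _ _) hN
          _ < δ / 2 := by
            rw [div_mul_eq_mul_div, div_lt_iff₀ (by positivity)]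
            nlinarith
      obtain ⟨e, he⟩ : ∃ e, e = (q - (s • a + r • c)) + τ • (s • a + r • c - b) := ⟨_, rfl⟩
      have hen : ‖e‖ < δ := by
        rw [he]
        refine (norm_add_le _ _).trans_lt ?_
        rw [norm_smul, Real.norm_of_nonneg hτ0.le]
        rw [Metric.mem_ball, dist_eq_norm] at hq
        linarith
      have hmove : ∀ y ∈ segment ℝ a b ∪ segment ℝ b c, y + e ∈ V := fun y hy =>
        hδV (Metric.mem_thickening_iff.2 ⟨y, hy, by simpa [dist_eq_norm] using hen⟩)
      have hu : ∀ k ∈ Icc (0 : ℝ) 1, (b + e) + k • (a - b) ∈ V := by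
        intro k hk
        have := hmove (b + k • (a - b)) (Or.inl (by
          rw [segment_symm, segment_eq_image']; exact ⟨k, hk, rfl⟩))
        convert this using 1; abel
      have hv : ∀ k ∈ Icc (0 : ℝ) 1, (b + e) + k • (c - b) ∈ V := by
        intro k hk
        have := hmove (b + k • (c - b)) (Or.inr (by
          rw [segment_eq_image']; exact ⟨k, hk, rfl⟩))
        convert this using 1; abel
      have hVU : V ⊆ convexHull ℝ U := fun y hy => (interior_subset (hVW hy)).1
      have hs' : 0 ≤ (1 - τ) * s := mul_nonneg (by linarith) hs
      have hr' : 0 ≤ (1 - τ) * r := mul_nonneg (by linarith) hr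
      have hsum : (1 - τ) * s + (1 - τ) * r = 1 - τ := by rw [← mul_add, hsr, mul_one]
      have hq' : q = (b + e) + ((1 - τ) * s) • (a - b) + ((1 - τ) * r) • (c - b) := by
        have hr1 : r = 1 - s := by linarith
        rw [he, hr1]
        ext i; simp; ring
      refine ⟨?_, fun z hz => ne_zero_triangle hU.convexHull (convex_convexHull ℝ U) hH hVU
        (fun z hz => (interior_subset (hVW hz)).2 z rfl) (b + e) (a - b) (c - b) hu hv hs' hr'
        (by linarith) z (hz.trans hq')⟩
      rw [hq']
      exact (convex_convexHull ℝ U).triangle_mem (by simpa using hVU (hu 0 (by simp)))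
        (by simpa using hVU (hu 1 (by simp))) (by simpa using hVU (hv 1 (by simp))) hs' hr'
        (by linarith)
    exact interior_mono hball (by
      rw [Metric.isOpen_ball.interior_eq]; exact Metric.mem_ball_self (by linarith))
  have hnear : ∀ y ∈ V, ∃ ρ > 0, ∀ y' ∈ Metric.ball y ρ, segment ℝ y y' ⊆ V := by
    intro y hy
    obtain ⟨ρ, hρ, hρV⟩ := Metric.isOpen_iff.1 hVo y hy
    exact ⟨ρ, hρ, fun y' hy' => ((convex_ball y ρ).segment_subset (Metric.mem_ball_self hρ)
      hy').trans hρV⟩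
  have hVconv : Convex ℝ V := by
    rw [convex_iff_segment_subset]
    intro a ha c hc
    have hsub : V ⊆ {y | segment ℝ a y ⊆ V} := by
      refine hVc.subset_of_closure_inter_subset ?_ ⟨a, ha, by simpa using ha⟩ ?_
      · rw [Metric.isOpen_iff]
        intro y hy
        obtain ⟨ρ, hρ, h⟩ := hnear y (hy (right_mem_segment _ _ _))
        exact ⟨ρ, hρ, fun y' hy' => htrans _ _ _ hy (h y' hy')⟩
      · rintro y ⟨hycl, hyV⟩
        obtain ⟨ρ, hρ, h⟩ := hnear y hyV
        obtain ⟨y', hy', hd⟩ := Metric.mem_closure_iff.1 hycl ρ hρ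
        refine htrans _ _ _ hy' ?_
        rw [segment_symm]
        exact h y' (by rwa [Metric.mem_ball, dist_comm])
    exact hsub hc
  intro z hz
  exact (interior_subset (hVW (convexHull_min hUV hVconv hz))).2 z rfl


/-- if `g, h` are holomorphic on a tube `T(U)`, `h` nonvanishing, and
`|g| ≤ |h|` on `T(U)`, then the same inequality holds for any holomorphic continuations
to the tube over the convex hull of `U`. -/
theorem stmt12 (n : ℕ) (U : Set (Fin n → ℝ)) (hUopen : IsOpen U) (hUconn : IsConnected U)
    (g h gt ht : (Fin n → ℂ) → ℂ)
    (hg : DifferentiableOn ℂ g {z : Fin n → ℂ | (fun i => (z i).re) ∈ U})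
    (hh : DifferentiableOn ℂ h {z : Fin n → ℂ | (fun i => (z i).re) ∈ U})
    (hne : ∀ z ∈ {z : Fin n → ℂ | (fun i => (z i).re) ∈ U}, h z ≠ 0)
    (hle : ∀ z ∈ {z : Fin n → ℂ | (fun i => (z i).re) ∈ U}, ‖g z‖ ≤ ‖h z‖)
    (hgt : DifferentiableOn ℂ gt {z : Fin n → ℂ | (fun i => (z i).re) ∈ convexHull ℝ U})
    (hht : DifferentiableOn ℂ ht {z : Fin n → ℂ | (fun i => (z i).re) ∈ convexHull ℝ U})
    (hgeq : Set.EqOn gt g {z : Fin n → ℂ | (fun i => (z i).re) ∈ U})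
    (hheq : Set.EqOn ht h {z : Fin n → ℂ | (fun i => (z i).re) ∈ U}) :
    ∀ z ∈ {z : Fin n → ℂ | (fun i => (z i).re) ∈ convexHull ℝ U}, ‖gt z‖ ≤ ‖ht z‖ := by
  intro z hz
  by_contra! hlt
  have hg0 : gt z ≠ 0 := norm_pos_iff.1 ((norm_nonneg _).trans_lt hlt)
  have hc : ‖ht z / gt z‖ < 1 := by
    rw [norm_div, div_lt_one (norm_pos_iff.2 hg0)]
    exact hlt
  refine ne_zero_on_convexHull (H := fun w => ht w - ht z / gt z * gt w) hUopen hUconn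
    (hht.sub (hgt.const_mul _)) (fun w hw h0 => ?_) z hz ?_
  · have hh0 := norm_pos_iff.2 (hne w hw)
    have hw' := hle w hw
    rw [← hgeq hw, ← hheq hw] at hw'
    rw [← hheq hw] at hh0
    have h1 : ‖ht w‖ = ‖ht z / gt z‖ * ‖gt w‖ := by rw [← norm_mul, ← sub_eq_zero.1 h0]
    nlinarith [norm_nonneg (ht z / gt z)]
  · simp [hg0]
end
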